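/- arXiv:1812.07629 — 2 statements merged into one kernel-verified Lean document; each statement's English description precedes it below -/
import Mathlib

section
/- Let Ω ⊆ ℝ^d be open, E, F finite-dimensional real inner product spaces, P_0, P_1, …, P_d : E → F linear, and let μ = g|μ| be an E-valued Radon measure on Ω satisfying P(D)μ = 0 in the sense of distributions. Let Λ_P := ⋃_{ξ ∈ ℝ^d} ker P(ξ) ⊆ E be the wave cone, where P(ξ) = ∑_{i=1}^d ξ_i P_i. Then the restriction of |μ| to the Borel set {x ∈ Ω : g(x) ∉ Λ_P} is absolutely continuous with respect to H^κ for every real κ with 0 ≤ κ < d. -/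
/-!
The proof shows that `ν (closedBall x₀ δ) = O(δ^κ)` for every `κ < d`, at `ν`-almost every `x₀` with
`g x₀ ∉ Λ_P`; the mass distribution principle then gives absolute continuity with respect to `μH[κ]`.

Let `x₀` be a Lebesgue point of `g` (almost every point is one, by Besicovitch differentiation) with
`e = g x₀ ∉ Λ_P`. Since `ξ ↦ ∑ᵢ ξᵢ Pᵢ e` is injective, there is a linear `A : ℝ^d → F` with
`⟪Pᵢ e, A v⟫ = vᵢ` (`exists_dual_of_notMem_waveCone`). Testing the equation with `A ∘ ψ` gives
`∫ div ψ dν = ∫ ∑ᵢ ⟪Pᵢ (e - g), ∂ᵢ(A ∘ ψ)⟫ dν + ∫ ⟪P₀ g, A ∘ ψ⟫ dν`.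
Choose `ψ x = w x • (x - x₀)`, cut off at scale `r₀`, with `w = (δ² + |x - x₀|²)^(-κ/2)`. Up to
errors bounded uniformly in `δ`, `div ψ ≥ (d - κ) w`, `|Dψ| ≤ (κ + 1) w` and `|ψ| ≤ r₀ w`.
The weight is radially decreasing, so `∫ w |g - e| dν ≤ ε ∫ w dν` by the layer cake formula
(`lintegral_radial_le`), with `ε` small when `r₀` is small. Hence the right side is absorbed and
`∫ w dν` is bounded uniformly in `δ` (`energy_bound`). Since `w` is at least a multiple of `δ^(-κ)` on
`closedBall x₀ δ`, the bound on balls follows.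
-/

open MeasureTheory Metric Filter
open scoped ENNReal RealInnerProductSpace Topology

/-- The set `{ξ ∈ ℝ^d : P(ξ)e = 0}`, where `P(ξ) = ∑ᵢ ξᵢ Pᵢ` is the principal symbol of the
first-order operator with coefficients `P i`; it is a linear subspace of `ℝ^d`. -/
noncomputable def kerSymb {d : ℕ} {E F : Type*} [NormedAddCommGroup E] [InnerProductSpace ℝ E]
    [NormedAddCommGroup F] [InnerProductSpace ℝ F] (P : Fin d → E →ₗ[ℝ] F) (e : E) :
    Submodule ℝ (EuclideanSpace ℝ (Fin d)) where
  carrier := {ξ | ∑ i, ξ i • P i e = 0}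
  zero_mem' := by simp
  add_mem' {x y} hx hy := by
    simp only [Set.mem_setOf_eq] at hx hy ⊢
    have : ∑ i, (x + y) i • P i e = (∑ i, x i • P i e) + ∑ i, y i • P i e := by
      rw [← Finset.sum_add_distrib]
      exact Finset.sum_congr rfl fun i _ => by simp [PiLp.add_apply, add_smul]
    rw [this, hx, hy, add_zero]
  smul_mem' c x hx := by
    simp only [Set.mem_setOf_eq] at hx ⊢
    have : ∑ i, (c • x) i • P i e = c • ∑ i, x i • P i e := by
      rw [Finset.smul_sum]
      exact Finset.sum_congr rfl fun i _ => by simp [PiLp.smul_apply, smul_smul]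
    rw [this, hx, smul_zero]

/-- `ℓ_P`, the minimal dimension of `{ξ : P(ξ)e = 0}ᗮ` over nonzero `e ∈ E`. -/
noncomputable def ellP {d : ℕ} {E F : Type*} [NormedAddCommGroup E] [InnerProductSpace ℝ E]
    [NormedAddCommGroup F] [InnerProductSpace ℝ F] (P : Fin d → E →ₗ[ℝ] F) : ℕ :=
  sInf {n : ℕ | ∃ e : E, e ≠ 0 ∧ Module.finrank ℝ ((kerSymb P e)ᗮ) = n}

/-- `P(D)μ = 0` in the sense of distributions on `Ω`, for the `E`-valued measure `μ = g ν`
(`ν = |μ|`, `g` the polar): for every smooth compactly supported test function `φ : Ω → F`,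
`∑ᵢ ∫ ⟪Pᵢ(g x), ∂ᵢφ x⟫ dν = ∫ ⟪P₀(g x), φ x⟫ dν`. -/
def SolvesPDE {d : ℕ} {E F : Type*} [NormedAddCommGroup E] [InnerProductSpace ℝ E]
    [NormedAddCommGroup F] [InnerProductSpace ℝ F]
    (Ω : Set (EuclideanSpace ℝ (Fin d))) (P₀ : E →ₗ[ℝ] F) (P : Fin d → E →ₗ[ℝ] F)
    (ν : Measure (EuclideanSpace ℝ (Fin d))) (g : EuclideanSpace ℝ (Fin d) → E) : Prop :=
  ∀ φ : EuclideanSpace ℝ (Fin d) → F, ContDiff ℝ (⊤ : ℕ∞) φ → HasCompactSupport φ → tsupport φ ⊆ Ω →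
    (∑ i : Fin d, ∫ x, ⟪P i (g x), fderiv ℝ φ x (EuclideanSpace.single i 1)⟫ ∂ν)
      = ∫ x, ⟪P₀ (g x), φ x⟫ ∂ν

/-- The wave cone `Λ_P = ⋃_{ξ ≠ 0} ker P(ξ) ⊆ E` of the principal symbol
`P(ξ) = ∑ᵢ ξᵢ Pᵢ`. -/
def waveCone {d : ℕ} {E F : Type*} [NormedAddCommGroup E] [InnerProductSpace ℝ E]
    [NormedAddCommGroup F] [InnerProductSpace ℝ F] (P : Fin d → E →ₗ[ℝ] F) : Set E :=
  {e | ∃ ξ : EuclideanSpace ℝ (Fin d), ξ ≠ 0 ∧ ∑ i, ξ i • P i e = 0}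

/-! ### Comparison of radial integrals -/

/-- Layer cake comparison: domination of `lam` by `c • ν` on balls centred at `x₀` passes to
integrals of radially nonincreasing functions, because their superlevel sets inside
`closedBall x₀ r₀` are such balls. -/
theorem lintegral_radial_le {V : Type*} [NormedAddCommGroup V] [ProperSpace V]
    [MeasurableSpace V] [BorelSpace V] (lam ν : Measure V) (x₀ : V) (r₀ : ℝ) (c : ℝ≥0∞)
    (h : ∀ r, 0 ≤ r → r ≤ r₀ → lam (closedBall x₀ r) ≤ c * ν (closedBall x₀ r))
    (w : V → ℝ) (hw : Continuous w) (hw0 : ∀ x, 0 ≤ w x)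
    (hrad : ∀ x y, dist x x₀ ≤ dist y x₀ → w y ≤ w x) :
    ∫⁻ x in closedBall x₀ r₀, ENNReal.ofReal (w x) ∂lam
      ≤ c * ∫⁻ x in closedBall x₀ r₀, ENNReal.ofReal (w x) ∂ν := by
  rw [lintegral_eq_lintegral_meas_le _ (ae_of_all _ hw0) hw.measurable.aemeasurable,
    lintegral_eq_lintegral_meas_le _ (ae_of_all _ hw0) hw.measurable.aemeasurable]
  have hanti : Antitone fun t : ℝ => (ν.restrict (closedBall x₀ r₀)) {a | t ≤ w a} :=
    fun s t hst => measure_mono fun a (ha : t ≤ w a) => hst.trans ha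
  rw [← lintegral_const_mul _ hanti.measurable]
  refine lintegral_mono fun t => ?_
  have hcl : IsClosed {a | t ≤ w a} := isClosed_le continuous_const hw
  simp only [Measure.restrict_apply hcl.measurableSet]
  have hcomp : IsCompact ({a | t ≤ w a} ∩ closedBall x₀ r₀) :=
    (isCompact_closedBall x₀ r₀).inter_left hcl
  rcases ({a | t ≤ w a} ∩ closedBall x₀ r₀).eq_empty_or_nonempty with he | hne
  · simp [he]
  -- the superlevel set is the closed ball through its point farthest from the centre
  obtain ⟨y, hy, hmax⟩ := hcomp.exists_isMaxOn hne
    (f := fun z => dist z x₀) (by fun_prop : Continuous fun z => dist z x₀).continuousOn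
  have heq : {a | t ≤ w a} ∩ closedBall x₀ r₀ = closedBall x₀ (dist y x₀) := by
    ext z
    constructor
    · intro hz
      exact hmax hz
    · intro hz
      have hz' : dist z x₀ ≤ dist y x₀ := hz
      exact ⟨le_trans hy.1 (hrad _ _ hz'), hz'.trans hy.2⟩
  rw [heq]
  exact h _ dist_nonneg hy.2

/-! ### The regularized weight and its truncation -/

/-- The smooth regularization `(δ² + |x - x₀|²)^(-κ/2)` of the Riesz kernel `|x - x₀|^(-κ)`. -/
noncomputable def radialWeight {V : Type*} [NormedAddCommGroup V] (κ δ : ℝ) (x₀ x : V) : ℝ :=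
  (δ ^ 2 + ‖x - x₀‖ ^ 2) ^ (-κ / 2)

section Weight

variable {V : Type*} [NormedAddCommGroup V] {κ δ : ℝ} {x₀ : V}

theorem radialWeight_base_pos (hδ : 0 < δ) (x : V) : 0 < δ ^ 2 + ‖x - x₀‖ ^ 2 := by positivity

theorem radialWeight_nonneg (x : V) : 0 ≤ radialWeight κ δ x₀ x := by
  unfold radialWeight; positivity

theorem radialWeight_anti (hκ : 0 < κ) (hδ : 0 < δ) (x y : V) (h : dist x x₀ ≤ dist y x₀) :
    radialWeight κ δ x₀ y ≤ radialWeight κ δ x₀ x := by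
  rw [dist_eq_norm, dist_eq_norm] at h
  refine Real.rpow_le_rpow_of_nonpos (radialWeight_base_pos hδ x) (by gcongr) (by linarith)

theorem radialWeight_le (hκ : 0 < κ) {r : ℝ} (hr : 0 < r) {x : V}
    (h : r ≤ ‖x - x₀‖) : radialWeight κ δ x₀ x ≤ (r ^ 2) ^ (-κ / 2) := by
  refine Real.rpow_le_rpow_of_nonpos (by positivity) ?_ (by linarith)
  have : r ^ 2 ≤ ‖x - x₀‖ ^ 2 := by gcongr
  nlinarith [sq_nonneg δ]

variable [InnerProductSpace ℝ V]

theorem radialWeight_contDiff (hδ : 0 < δ) : ContDiff ℝ (⊤ : ℕ∞) (radialWeight κ δ x₀) := by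
  refine ContDiff.rpow_const_of_ne ?_ fun x => (radialWeight_base_pos hδ x).ne'
  exact contDiff_const.add ((contDiff_id.sub contDiff_const).norm_sq ℝ)

theorem radialWeight_fderiv (hδ : 0 < δ) (x v : V) :
    fderiv ℝ (radialWeight κ δ x₀) x v
      = -κ * radialWeight κ δ x₀ x * (⟪x - x₀, v⟫ / (δ ^ 2 + ‖x - x₀‖ ^ 2)) := by
  have hb := radialWeight_base_pos (x₀ := x₀) hδ x
  have h1 : HasFDerivAt (fun y : V => δ ^ 2 + ‖y - x₀‖ ^ 2)
      (2 • (innerSL ℝ (x - x₀)).comp (ContinuousLinearMap.id ℝ V)) x :=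
    (((hasFDerivAt_id x).sub_const x₀).norm_sq).const_add _
  have h2 : HasFDerivAt (radialWeight κ δ x₀) _ x := h1.rpow_const (p := -κ / 2) (Or.inl hb.ne')
  rw [h2.fderiv]
  have h3 : (δ ^ 2 + ‖x - x₀‖ ^ 2) ^ (-κ / 2 - 1)
      = radialWeight κ δ x₀ x / (δ ^ 2 + ‖x - x₀‖ ^ 2) := by
    rw [Real.rpow_sub_one hb.ne']; rfl
  simp only [h3, _root_.smul_apply, ContinuousLinearMap.comp_apply,
    ContinuousLinearMap.id_apply, innerSL_apply_apply, smul_eq_mul, nsmul_eq_mul, Nat.cast_ofNat]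
  ring

/-- A cutoff `u` of `radialWeight κ δ x₀` to `closedBall x₀ r₀`. The lower bound on the radial
derivative gives `div (u x • (x - x₀)) ≥ (d - κ) u - K`; the errors `K` and `q` come from the
annulus where the cutoff varies, and the point is that they do not depend on `δ`. -/
theorem exists_testWeight [FiniteDimensional ℝ V] (x₀ : V) {r₀ κ : ℝ} (hr : 0 < r₀) (hκ : 0 < κ) :
    ∃ K q : ℝ, 0 ≤ K ∧ 0 ≤ q ∧ ∀ δ, 0 < δ → ∃ u : V → ℝ, ContDiff ℝ (⊤ : ℕ∞) u ∧
      tsupport u ⊆ closedBall x₀ r₀ ∧ ∀ x, 0 ≤ u x ∧ u x ≤ radialWeight κ δ x₀ x ∧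
        radialWeight κ δ x₀ x ≤ u x + q ∧
        -κ * u x - K ≤ fderiv ℝ u x (x - x₀) ∧
        ‖fderiv ℝ u x‖ * ‖x - x₀‖ ≤ κ * radialWeight κ δ x₀ x + K := by
  let χ : ContDiffBump x₀ := ⟨r₀ / 2, r₀, by positivity, by linarith⟩
  have hχs : ContDiff ℝ (⊤ : ℕ∞) χ := χ.contDiff
  obtain ⟨M, hM⟩ := (χ.hasCompactSupport.fderiv ℝ).exists_bound_of_continuous
    (hχs.continuous_fderiv (by simp))
  have hM0 : 0 ≤ M := (norm_nonneg _).trans (hM x₀)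
  set q : ℝ := ((r₀ / 2) ^ 2) ^ (-κ / 2) with hq
  have hq0 : 0 ≤ q := by positivity
  refine ⟨q * M * r₀, q, by positivity, hq0, fun δ hδ => ?_⟩
  have hwd : ContDiff ℝ (⊤ : ℕ∞) (radialWeight κ δ x₀) := radialWeight_contDiff hδ
  refine ⟨fun x => radialWeight κ δ x₀ x * χ x, hwd.mul hχs, ?_, fun x => ?_⟩
  · exact (tsupport_mul_subset_right).trans χ.tsupport_eq.subset
  have hw0 := radialWeight_nonneg (κ := κ) (δ := δ) (x₀ := x₀) x
  have hχ0 : 0 ≤ χ x := χ.nonneg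
  have hχ1 : χ x ≤ 1 := χ.le_one
  have hb := radialWeight_base_pos (x₀ := x₀) hδ x
  -- the derivative of the cutoff only lives on the annulus, where the weight is at most `q`
  have hK : radialWeight κ δ x₀ x * ‖fderiv ℝ χ x‖ * ‖x - x₀‖ ≤ q * M * r₀ := by
    by_cases h1 : x ∈ ball x₀ (r₀ / 2)
    · have : (χ : V → ℝ) =ᶠ[𝓝 x] fun _ => 1 := by
        filter_upwards [isOpen_ball.mem_nhds h1] with z hz
        exact χ.one_of_mem_closedBall (ball_subset_closedBall hz)
      rw [this.fderiv_eq]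
      simp; positivity
    by_cases h2 : x ∈ closedBall x₀ r₀
    · rw [mem_closedBall, dist_eq_norm] at h2
      rw [mem_ball, dist_eq_norm, not_lt] at h1
      have h3 := radialWeight_le (δ := δ) hκ (by positivity) h1
      have h4 := hM x
      gcongr
    · have : fderiv ℝ χ x = 0 := by
        by_contra hne
        exact h2 (χ.tsupport_eq.subset (support_fderiv_subset ℝ hne))
      rw [this]; simp; positivity
  have hD : ∀ v, fderiv ℝ (fun x => radialWeight κ δ x₀ x * χ x) x v
      = radialWeight κ δ x₀ x * fderiv ℝ χ x v
        + χ x * (-κ * radialWeight κ δ x₀ x * (⟪x - x₀, v⟫ / (δ ^ 2 + ‖x - x₀‖ ^ 2))) := by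
    intro v
    rw [fderiv_fun_mul ((hwd.differentiable (by simp)) x) ((hχs.differentiable (by simp)) x)]
    simp [radialWeight_fderiv hδ]
  beta_reduce
  refine ⟨by positivity, mul_le_of_le_one_right hw0 hχ1, ?_, ?_, ?_⟩
  · by_cases h1 : x ∈ closedBall x₀ (r₀ / 2)
    · rw [χ.one_of_mem_closedBall h1]; linarith
    · rw [mem_closedBall, dist_eq_norm, not_le] at h1
      have h3 := radialWeight_le (δ := δ) hκ (by positivity) h1.le
      have : 0 ≤ radialWeight κ δ x₀ x * χ x := by positivity
      linarith
  · rw [hD, real_inner_self_eq_norm_sq]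
    have h1 : -(radialWeight κ δ x₀ x * ‖fderiv ℝ χ x‖ * ‖x - x₀‖)
        ≤ radialWeight κ δ x₀ x * fderiv ℝ χ x (x - x₀) := by
      have h4 : |fderiv ℝ χ x (x - x₀)| ≤ ‖fderiv ℝ χ x‖ * ‖x - x₀‖ :=
        (fderiv ℝ χ x).le_opNorm _
      have := mul_le_mul_of_nonneg_left (neg_le_of_abs_le h4) hw0
      linarith
    have h2 : ‖x - x₀‖ ^ 2 / (δ ^ 2 + ‖x - x₀‖ ^ 2) ≤ 1 :=
      (div_le_one hb).2 (by nlinarith [sq_nonneg δ])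
    have h3 : 0 ≤ κ * (radialWeight κ δ x₀ x * χ x) := by positivity
    have := mul_le_mul_of_nonneg_left h2 h3
    nlinarith
  · have h1 : ‖fderiv ℝ (fun x => radialWeight κ δ x₀ x * χ x) x‖
        ≤ radialWeight κ δ x₀ x * ‖fderiv ℝ χ x‖
          + κ * radialWeight κ δ x₀ x * (‖x - x₀‖ / (δ ^ 2 + ‖x - x₀‖ ^ 2)) := by
      refine ContinuousLinearMap.opNorm_le_bound _ (by positivity) fun v => ?_
      rw [hD]
      refine (norm_add_le _ _).trans ?_
      rw [add_mul]
      refine add_le_add ?_ ?_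
      · rw [norm_mul, Real.norm_of_nonneg hw0, mul_assoc]
        gcongr
        exact (fderiv ℝ χ x).le_opNorm _
      · have h5 : ‖⟪x - x₀, v⟫‖ ≤ ‖x - x₀‖ * ‖v‖ := norm_inner_le_norm _ _
        rw [norm_mul, norm_mul, norm_mul, norm_div, norm_neg, Real.norm_of_nonneg hχ0,
          Real.norm_of_nonneg hκ.le, Real.norm_of_nonneg hw0, Real.norm_of_nonneg hb.le]
        calc _ ≤ 1 * (κ * radialWeight κ δ x₀ x *
              ((‖x - x₀‖ * ‖v‖) / (δ ^ 2 + ‖x - x₀‖ ^ 2))) := by gcongr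
          _ = _ := by ring
    have h2 : ‖x - x₀‖ / (δ ^ 2 + ‖x - x₀‖ ^ 2) * ‖x - x₀‖ ≤ 1 := by
      rw [div_mul_eq_mul_div, div_le_one hb]; nlinarith [sq_nonneg δ]
    have h3 : 0 ≤ κ * radialWeight κ δ x₀ x := by positivity
    have h4 := mul_le_mul_of_nonneg_left h2 h3
    have h5 := mul_le_mul_of_nonneg_right h1 (norm_nonneg (x - x₀))
    nlinarith

end Weight

/-! ### Duality off the wave cone -/

/-- If `e` is not in the wave cone then `ξ ↦ ∑ᵢ ξᵢ Pᵢ e` is injective; `A` is the adjoint of a left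
inverse. Testing the operator applied to a constant polar `e` with `A ∘ ψ` thus produces the
divergence of the vector field `ψ`. -/
theorem exists_dual_of_notMem_waveCone {d : ℕ} {E F : Type*} [NormedAddCommGroup E]
    [InnerProductSpace ℝ E] [NormedAddCommGroup F] [InnerProductSpace ℝ F]
    [FiniteDimensional ℝ F] (P : Fin d → E →ₗ[ℝ] F) {e : E} (he : e ∉ waveCone P) :
    ∃ A : EuclideanSpace ℝ (Fin d) →L[ℝ] F, ∀ i v, ⟪P i e, A v⟫ = v i := by
  let M : EuclideanSpace ℝ (Fin d) →ₗ[ℝ] F :=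
    ∑ i, (EuclideanSpace.proj (𝕜 := ℝ) i : EuclideanSpace ℝ (Fin d) →L[ℝ] ℝ).toLinearMap.smulRight
      (P i e)
  have hM : ∀ ξ, M ξ = ∑ i, ξ i • P i e := fun ξ => by simp [M]
  have hker : LinearMap.ker M = ⊥ := by
    rw [LinearMap.ker_eq_bot']
    intro ξ hξ
    by_contra hne
    exact he ⟨ξ, hne, (hM ξ).symm.trans hξ⟩
  obtain ⟨L, hL⟩ := M.exists_leftInverse_of_injective hker
  refine ⟨(LinearMap.adjoint L).toContinuousLinearMap, fun i v => ?_⟩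
  have h1 : M (EuclideanSpace.single i 1) = P i e := by
    rw [hM, Finset.sum_eq_single i]
    · simp
    · intro j _ hj; simp [hj]
    · simp
  have h2 : L (P i e) = EuclideanSpace.single i 1 := by
    rw [← h1, ← LinearMap.comp_apply, hL, LinearMap.id_apply]
  rw [LinearMap.coe_toContinuousLinearMap', LinearMap.adjoint_inner_right, h2]
  simp [EuclideanSpace.inner_single_left]

/-! ### The energy estimate and its consequence for balls -/

set_option maxHeartbeats 1000000 in
/-- The `κ`-energy of `ν` at a point `x₀` near which the polar oscillates little around a vector `e`
off the wave cone is finite, with a bound uniform in the regularization `δ`. The test function is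
`u x • A (x - x₀)` with `u` the truncated weight; the constant `C` only depends on `P₀`, `P`, `A`, so
that the smallness condition on `r₀` and `ε` can be met afterwards. -/
theorem energy_bound {d : ℕ} {E F : Type*} [NormedAddCommGroup E] [InnerProductSpace ℝ E]
    [FiniteDimensional ℝ E] [NormedAddCommGroup F] [InnerProductSpace ℝ F]
    (P₀ : E →ₗ[ℝ] F) (P : Fin d → E →ₗ[ℝ] F) (A : EuclideanSpace ℝ (Fin d) →L[ℝ] F) :
    ∃ C : ℝ, 0 < C ∧ ∀ (x₀ : EuclideanSpace ℝ (Fin d)) (r₀ : ℝ), 0 < r₀ →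
      ∀ (ν : Measure (EuclideanSpace ℝ (Fin d))) [IsFiniteMeasure ν],
      ν (closedBall x₀ r₀)ᶜ = 0 →
      ∀ (g : EuclideanSpace ℝ (Fin d) → E), AEStronglyMeasurable g ν → (∀ᵐ x ∂ν, ‖g x‖ = 1) →
      SolvesPDE (closedBall x₀ r₀) P₀ P ν g →
      ∀ (e : E), (∀ i v, ⟪P i e, A v⟫ = v i) →
      ∀ (ε : ℝ), 0 ≤ ε →
      (∀ r, 0 ≤ r → r ≤ r₀ → ∫⁻ y in closedBall x₀ r, ‖g y - e‖ₑ ∂ν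
        ≤ ENNReal.ofReal ε * ν (closedBall x₀ r)) →
      ∀ κ : ℝ, 0 < κ → κ < d → C * r₀ + C * (κ + 1) * ε ≤ (d - κ) / 2 →
      ∃ I₀ : ℝ, ∀ δ, 0 < δ → ∫ x, radialWeight κ δ x₀ x ∂ν ≤ I₀ := by
  obtain ⟨p₀, hp₀0, hP₀⟩ : ∃ p₀ : ℝ, 0 ≤ p₀ ∧ ∀ e, ‖P₀ e‖ ≤ p₀ * ‖e‖ :=
    ⟨_, norm_nonneg _, P₀.toContinuousLinearMap.le_opNorm⟩
  obtain ⟨m, hm0, hP⟩ : ∃ m : Fin d → ℝ, (∀ i, 0 ≤ m i) ∧ ∀ i e, ‖P i e‖ ≤ m i * ‖e‖ :=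
    ⟨_, fun i => norm_nonneg _, fun i => (P i).toContinuousLinearMap.le_opNorm⟩
  obtain ⟨p, hp⟩ : ∃ p : ℝ, p = ∑ i, m i := ⟨_, rfl⟩
  have hp0 : 0 ≤ p := hp ▸ Finset.sum_nonneg fun i _ => hm0 i
  have hA0 := norm_nonneg A
  obtain ⟨C, hCpos, hC1, hC2⟩ : ∃ C : ℝ, 0 < C ∧ p * ‖A‖ ≤ C ∧ p₀ * ‖A‖ ≤ C :=
    ⟨(p₀ + p) * ‖A‖ + 1, by positivity, by nlinarith [mul_nonneg hp₀0 hA0],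
      by nlinarith [mul_nonneg hp0 hA0]⟩
  refine ⟨C, hCpos, fun x₀ r₀ hr ν _ hνB g hg hg1 hPDE e he ε hε hosc κ hκ hκd hsmall => ?_⟩
  obtain ⟨K, q, hK, hq, hu⟩ := exists_testWeight x₀ hr hκ
  have hd0 : (0 : ℝ) ≤ d := d.cast_nonneg
  set K₁ : ℝ := K + d * q + C * (1 + ‖e‖) * K with hK₁
  refine ⟨2 * (K₁ * ν.real Set.univ) / (d - κ), fun δ hδ => ?_⟩
  obtain ⟨u, hud, hus, hub⟩ := hu δ hδ
  have hB : ∀ᵐ x ∂ν, x ∈ closedBall x₀ r₀ := hνB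
  have hwc : Continuous (radialWeight κ δ x₀) := (radialWeight_contDiff hδ).continuous
  have hwle : ∀ x, radialWeight κ δ x₀ x ≤ radialWeight κ δ x₀ x₀ := fun x =>
    radialWeight_anti hκ hδ _ _ (by simp)
  have hw0 : ∀ x, 0 ≤ radialWeight κ δ x₀ x := radialWeight_nonneg
  have hwint : Integrable (radialWeight κ δ x₀) ν :=
    Integrable.of_bound hwc.aestronglyMeasurable (radialWeight κ δ x₀ x₀)
      (ae_of_all _ fun x => by rw [Real.norm_of_nonneg (hw0 x)]; exact hwle x)
  -- the test function
  set φ : EuclideanSpace ℝ (Fin d) → F := fun x => u x • A (x - x₀) with hφ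
  have hAd : ContDiff ℝ (⊤ : ℕ∞) fun x => A (x - x₀) :=
    A.contDiff.comp (contDiff_id.sub contDiff_const)
  have hφd : ContDiff ℝ (⊤ : ℕ∞) φ := hud.smul hAd
  have hφs : tsupport φ ⊆ closedBall x₀ r₀ := (tsupport_smul_subset_left _ _).trans hus
  have hφc : HasCompactSupport φ :=
    (isCompact_closedBall x₀ r₀).of_isClosed_subset (isClosed_tsupport _) hφs
  have hDφ : ∀ x v, fderiv ℝ φ x v = u x • A v + fderiv ℝ u x v • A (x - x₀) := by
    intro x v
    have h1 : HasFDerivAt (fun x => A (x - x₀)) (A.comp (ContinuousLinearMap.id ℝ _)) x :=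
      A.hasFDerivAt.comp x ((hasFDerivAt_id x).sub_const x₀)
    have h2 : HasFDerivAt φ _ x := ((hud.differentiable (by simp)) x).hasFDerivAt.smul h1
    rw [h2.fderiv]
    simp
  have hpde := hPDE φ hφd hφc hφs
  -- integrability of the two sides of the equation
  have hint : ∀ (Q : E →ₗ[ℝ] F) (c : EuclideanSpace ℝ (Fin d) → F), Continuous c →
      HasCompactSupport c → Integrable (fun x => ⟪Q (g x), c x⟫) ν := by
    intro Q c hc hcs
    obtain ⟨M, hM⟩ := hcs.exists_bound_of_continuous hc
    refine Integrable.of_bound (C := ‖Q.toContinuousLinearMap‖ * M) ?_ ?_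
    · exact (Q.toContinuousLinearMap.continuous.comp_aestronglyMeasurable hg).inner
        hc.aestronglyMeasurable
    · filter_upwards [hg1] with x hx
      refine (norm_inner_le_norm _ _).trans ?_
      have h1 : ‖Q (g x)‖ ≤ ‖Q.toContinuousLinearMap‖ * ‖g x‖ :=
        Q.toContinuousLinearMap.le_opNorm (g x)
      rw [hx, mul_one] at h1
      exact mul_le_mul h1 (hM x) (norm_nonneg _) (norm_nonneg _)
  have hint1 : ∀ i, Integrable
      (fun x => ⟪P i (g x), fderiv ℝ φ x (EuclideanSpace.single i 1)⟫) ν := fun i =>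
    hint (P i) _ ((hφd.continuous_fderiv (by simp)).clm_apply continuous_const)
      (hφc.fderiv_apply ℝ _)
  have hint0 : Integrable (fun x => ⟪P₀ (g x), φ x⟫) ν := hint P₀ φ hφd.continuous hφc
  rw [← integral_finsetSum _ fun i _ => hint1 i] at hpde
  set T : E → EuclideanSpace ℝ (Fin d) → ℝ :=
    fun a x => ∑ i, ⟪P i a, fderiv ℝ φ x (EuclideanSpace.single i 1)⟫ with hT
  have hTint : Integrable (fun x => T (g x) x) ν := integrable_finsetSum _ fun i _ => hint1 i
  have hTsub : ∀ a b x, T (a - b) x = T a x - T b x := by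
    intro a b x
    simp only [hT, map_sub, inner_sub_left, Finset.sum_sub_distrib]
  -- for the frozen polar, the left side is the divergence of `u x • (x - x₀)`
  have hTe : ∀ x, T e x = d * u x + fderiv ℝ u x (x - x₀) := by
    intro x
    have h1 : fderiv ℝ u x (x - x₀)
        = ∑ i, (x - x₀) i * fderiv ℝ u x (EuclideanSpace.single i 1) := by
      conv_lhs => rw [← (EuclideanSpace.basisFun (Fin d) ℝ).sum_repr (x - x₀)]
      simp [map_sum]
    rw [h1]
    simp only [hT, hDφ, inner_add_right, inner_smul_right, he, Finset.sum_add_distrib]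
    simp [mul_comm]
  have hTb : ∀ a x, |T a x| ≤ C * ‖a‖ * ((κ + 1) * radialWeight κ δ x₀ x + K) := by
    intro a x
    have hux := hub x
    have h1 : ∀ i, ‖fderiv ℝ φ x (EuclideanSpace.single i 1)‖
        ≤ ‖A‖ * ((κ + 1) * radialWeight κ δ x₀ x + K) := by
      intro i
      rw [hDφ]
      refine (norm_add_le _ _).trans ?_
      rw [norm_smul, norm_smul, Real.norm_of_nonneg hux.1]
      have h2 : ‖A (EuclideanSpace.single i 1)‖ ≤ ‖A‖ := by
        simpa using A.le_opNorm (EuclideanSpace.single i (1 : ℝ))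
      have h3 : ‖fderiv ℝ u x (EuclideanSpace.single i 1)‖ ≤ ‖fderiv ℝ u x‖ := by
        simpa using (fderiv ℝ u x).le_opNorm (EuclideanSpace.single i (1 : ℝ))
      have h4 := A.le_opNorm (x - x₀)
      calc _ ≤ radialWeight κ δ x₀ x * ‖A‖ + ‖fderiv ℝ u x‖ * (‖A‖ * ‖x - x₀‖) := by
            gcongr
            exacts [hw0 x, hux.2.1]
        _ = ‖A‖ * (radialWeight κ δ x₀ x + ‖fderiv ℝ u x‖ * ‖x - x₀‖) := by ring
        _ ≤ _ := by
            refine mul_le_mul_of_nonneg_left ?_ (norm_nonneg A)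
            linarith [hux.2.2.2.2]
    have hpos : 0 ≤ (κ + 1) * radialWeight κ δ x₀ x + K := by have := hw0 x; positivity
    calc |T a x| ≤ ∑ i, |⟪P i a, fderiv ℝ φ x (EuclideanSpace.single i 1)⟫| :=
          Finset.abs_sum_le_sum_abs _ _
      _ ≤ ∑ i, m i * ‖a‖ *
            (‖A‖ * ((κ + 1) * radialWeight κ δ x₀ x + K)) := by
          refine Finset.sum_le_sum fun i _ => (abs_real_inner_le_norm _ _).trans ?_
          exact mul_le_mul (hP i a) (h1 i) (norm_nonneg _) (mul_nonneg (hm0 i) (norm_nonneg _))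
      _ = (p * ‖A‖) * (‖a‖ * ((κ + 1) * radialWeight κ δ x₀ x + K)) := by
          rw [← Finset.sum_mul, ← Finset.sum_mul, ← hp]; ring
      _ ≤ C * (‖a‖ * ((κ + 1) * radialWeight κ δ x₀ x + K)) := by gcongr
      _ = _ := by ring
  -- the oscillation of the polar against the weight, by the layer cake formula
  have hgm : AEStronglyMeasurable (fun x => g x - e) ν := hg.sub aestronglyMeasurable_const
  have hoscint : Integrable (fun x => ‖g x - e‖ * radialWeight κ δ x₀ x) ν := by
    refine Integrable.of_bound (C := (1 + ‖e‖) * radialWeight κ δ x₀ x₀)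
      (hgm.norm.mul hwc.aestronglyMeasurable) ?_
    filter_upwards [hg1] with x hx
    rw [norm_mul, norm_norm, Real.norm_of_nonneg (hw0 x)]
    have h1 : ‖g x - e‖ ≤ 1 + ‖e‖ := (norm_sub_le _ _).trans (by rw [hx])
    exact mul_le_mul h1 (hwle x) (hw0 x) (by positivity)
  have hlc : ∫ x, ‖g x - e‖ * radialWeight κ δ x₀ x ∂ν
      ≤ ε * ∫ x, radialWeight κ δ x₀ x ∂ν := by
    have h1 := lintegral_radial_le (ν.withDensity fun y => ‖g y - e‖ₑ) ν x₀ r₀ (ENNReal.ofReal ε)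
      (fun r h0 h1 => by
        rw [withDensity_apply _ isClosed_closedBall.measurableSet]; exact hosc r h0 h1)
      (radialWeight κ δ x₀) hwc hw0 (radialWeight_anti hκ hδ)
    rw [restrict_withDensity isClosed_closedBall.measurableSet,
      Measure.restrict_eq_self_of_ae_mem hB,
      lintegral_withDensity_eq_lintegral_mul₀ hgm.enorm
        hwc.measurable.ennreal_ofReal.aemeasurable] at h1
    have h2 : ∫⁻ x, ((fun y => ‖g y - e‖ₑ) * fun x => ENNReal.ofReal (radialWeight κ δ x₀ x)) x ∂ν
        = ∫⁻ x, ENNReal.ofReal (‖g x - e‖ * radialWeight κ δ x₀ x) ∂ν := by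
      refine lintegral_congr fun x => ?_
      rw [Pi.mul_apply, ENNReal.ofReal_mul (norm_nonneg _), ofReal_norm]
    rw [h2, ← ofReal_integral_eq_lintegral_ofReal hoscint
        (ae_of_all _ fun x => mul_nonneg (norm_nonneg _) (hw0 x)),
      ← ofReal_integral_eq_lintegral_ofReal hwint (ae_of_all _ hw0),
      ← ENNReal.ofReal_mul hε] at h1
    exact (ENNReal.ofReal_le_ofReal_iff
      (mul_nonneg hε (integral_nonneg hw0))).1 h1
  -- the pointwise inequality whose integral is the claim
  have hpt : ∀ᵐ x ∂ν, (d - κ) * radialWeight κ δ x₀ x ≤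
      (T (g x) x - ⟪P₀ (g x), φ x⟫) + (C * r₀ * radialWeight κ δ x₀ x
        + (C * (κ + 1) * (‖g x - e‖ * radialWeight κ δ x₀ x) + K₁)) := by
    filter_upwards [hg1, hB] with x hx hxB
    rw [mem_closedBall, dist_eq_norm] at hxB
    obtain ⟨hu0, huw, hwu, hdiv, -⟩ := hub x
    have h1 : ‖g x - e‖ ≤ 1 + ‖e‖ := (norm_sub_le _ _).trans (by rw [hx])
    have h2 := neg_le_of_abs_le (hTb (g x - e) x)
    rw [hTsub, hTe] at h2
    have h3 : ⟪P₀ (g x), φ x⟫ ≤ C * r₀ * radialWeight κ δ x₀ x := by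
      refine (real_inner_le_norm _ _).trans ?_
      have h4 := hP₀ (g x)
      rw [hx, mul_one] at h4
      have h5 : ‖φ x‖ ≤ radialWeight κ δ x₀ x * (‖A‖ * r₀) := by
        rw [hφ]
        simp only [norm_smul, Real.norm_of_nonneg hu0]
        have := A.le_opNorm (x - x₀)
        have h6 : ‖A (x - x₀)‖ ≤ ‖A‖ * r₀ := this.trans (by gcongr)
        exact mul_le_mul huw h6 (norm_nonneg _) (hw0 x)
      calc _ ≤ p₀ * (radialWeight κ δ x₀ x * (‖A‖ * r₀)) :=
            mul_le_mul h4 h5 (norm_nonneg _) hp₀0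
        _ = (p₀ * ‖A‖) * (r₀ * radialWeight κ δ x₀ x) := by ring
        _ ≤ C * (r₀ * radialWeight κ δ x₀ x) := by
            have := hw0 x
            gcongr
        _ = _ := by ring
    have h4 : C * K * ‖g x - e‖ ≤ C * K * (1 + ‖e‖) := by gcongr
    have h5 : (d - κ) * radialWeight κ δ x₀ x ≤ (d - κ) * (u x + q) :=
      mul_le_mul_of_nonneg_left hwu (by linarith)
    have h6 : 0 ≤ κ * q := by positivity
    rw [hK₁]
    linarith
  have hi1 : Integrable (fun x => T (g x) x - ⟪P₀ (g x), φ x⟫) ν := hTint.sub hint0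
  have hi2 := hwint.const_mul (C * r₀)
  have hi3 := hoscint.const_mul (C * (κ + 1))
  have hi4 : Integrable (fun _ : EuclideanSpace ℝ (Fin d) => K₁) ν := integrable_const _
  have hi34 : Integrable (fun x => C * (κ + 1) * (‖g x - e‖ * radialWeight κ δ x₀ x) + K₁) ν :=
    hi3.add hi4
  have hi234 : Integrable (fun x => C * r₀ * radialWeight κ δ x₀ x
      + (C * (κ + 1) * (‖g x - e‖ * radialWeight κ δ x₀ x) + K₁)) ν := hi2.add hi34
  have hfin := integral_mono_ae (hwint.const_mul (d - κ)) (hi1.add hi234) hpt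
  simp only [Pi.add_def] at hfin
  rw [integral_add hi1 hi234, integral_add hi2 hi34,
    integral_add hi3 hi4, integral_sub hTint hint0, hpde, sub_self, integral_const_mul,
    integral_const_mul, integral_const_mul, integral_const, smul_eq_mul] at hfin
  set I : ℝ := ∫ x, radialWeight κ δ x₀ x ∂ν with hI
  have hI0 : 0 ≤ I := integral_nonneg hw0
  have h1 : C * (κ + 1) * ∫ x, ‖g x - e‖ * radialWeight κ δ x₀ x ∂ν ≤ C * (κ + 1) * (ε * I) :=
    mul_le_mul_of_nonneg_left hlc (by positivity)
  have h2 := mul_le_mul_of_nonneg_right hsmall hI0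
  rw [le_div_iff₀ (by linarith)]
  linarith

/-- Chebyshev's inequality for the energy: `radialWeight κ δ x₀ ≥ (2δ²)^(-κ/2)` on
`closedBall x₀ δ`. -/
theorem ball_le_of_energy_bound {V : Type*} [NormedAddCommGroup V] [InnerProductSpace ℝ V]
    [MeasurableSpace V] [BorelSpace V] (ν : Measure V) [IsFiniteMeasure ν] {κ : ℝ} (hκ : 0 < κ)
    {x₀ : V} {I₀ : ℝ} (h : ∀ δ, 0 < δ → ∫ x, radialWeight κ δ x₀ x ∂ν ≤ I₀) :
    ∃ c : ℝ, 0 ≤ c ∧ ∀ δ, 0 < δ → ν (closedBall x₀ δ) ≤ ENNReal.ofReal (c * δ ^ κ) := by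
  have hI : 0 ≤ I₀ := (integral_nonneg fun _ => radialWeight_nonneg _).trans (h 1 one_pos)
  refine ⟨I₀ * 2 ^ (κ / 2), by positivity, fun δ hδ => ?_⟩
  have hw0 : ∀ x, 0 ≤ radialWeight κ δ x₀ x := radialWeight_nonneg
  have hwc : Continuous (radialWeight κ δ x₀) := (radialWeight_contDiff hδ).continuous
  have hwint : Integrable (radialWeight κ δ x₀) ν :=
    Integrable.of_bound hwc.aestronglyMeasurable (radialWeight κ δ x₀ x₀)
      (ae_of_all _ fun x => by
        rw [Real.norm_of_nonneg (hw0 x)]; exact radialWeight_anti hκ hδ _ _ (by simp))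
  have h1 : ∀ x ∈ closedBall x₀ δ, (2 * δ ^ 2) ^ (-κ / 2) ≤ radialWeight κ δ x₀ x := by
    intro x hx
    rw [mem_closedBall, dist_eq_norm] at hx
    refine Real.rpow_le_rpow_of_nonpos (radialWeight_base_pos hδ x) ?_ (by linarith)
    have : ‖x - x₀‖ ^ 2 ≤ δ ^ 2 := by gcongr
    linarith
  have h2 : (2 * δ ^ 2) ^ (-κ / 2) * ν.real (closedBall x₀ δ) ≤ I₀ := by
    calc _ = ∫ _ in closedBall x₀ δ, (2 * δ ^ 2) ^ (-κ / 2) ∂ν := by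
          rw [setIntegral_const, smul_eq_mul, mul_comm]
      _ ≤ ∫ x in closedBall x₀ δ, radialWeight κ δ x₀ x ∂ν :=
          setIntegral_mono_on (integrable_const _) hwint.integrableOn
            isClosed_closedBall.measurableSet h1
      _ ≤ ∫ x, radialWeight κ δ x₀ x ∂ν := setIntegral_le_integral hwint (ae_of_all _ hw0)
      _ ≤ I₀ := h δ hδ
  have h3 : (2 * δ ^ 2) ^ (-κ / 2) = (2 ^ (κ / 2) * δ ^ κ)⁻¹ := by
    rw [neg_div, Real.rpow_neg (by positivity), Real.mul_rpow (by positivity) (by positivity),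
      ← Real.rpow_natCast, ← Real.rpow_mul hδ.le]
    congr 3
    push_cast; ring
  rw [h3, inv_mul_le_iff₀ (by positivity)] at h2
  rw [← ofReal_measureReal]
  exact ENNReal.ofReal_le_ofReal (by linarith)

/-! ### From density bounds to Hausdorff measure -/

/-- Mass distribution principle: a uniform upper bound on the `κ`-density at the points of `D`
makes `ν.restrict D` absolutely continuous with respect to `μH[κ]`. The set `D` need not be
measurable. -/
theorem restrict_absolutelyContinuous_hausdorff {V : Type*} [NormedAddCommGroup V] [MeasurableSpace V] [BorelSpace V]
    (ν : Measure V) {κ : ℝ} (hκ : 0 < κ) (n : ℕ) (D : Set V)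
    (hD : ∀ x ∈ D, ∀ δ, 0 < δ → δ ≤ 1 / (n + 1 : ℝ) →
      ν (closedBall x δ) ≤ ENNReal.ofReal ((n + 1) * δ ^ κ)) :
    ν.restrict D ≪ (μH[κ] : Measure V) := by
  have key : (ENNReal.ofReal (n + 1))⁻¹ • ν.restrict D ≤ (μH[κ] : Measure V) := by
    refine Measure.le_hausdorffMeasure κ _ (ENNReal.ofReal (1 / (2 * (n + 1)))) (by positivity)
      fun s hs => ?_
    rw [Measure.smul_apply, smul_eq_mul]
    have hfin : ediam s ≠ ⊤ := (hs.trans_lt ENNReal.ofReal_lt_top).ne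
    have hn0 : ENNReal.ofReal (n + 1) ≠ 0 := by positivity
    rw [mul_comm, ← div_eq_mul_inv,
      ENNReal.div_le_iff hn0 ENNReal.ofReal_ne_top]
    calc ν.restrict D s ≤ ν.restrict D (closure s) := measure_mono subset_closure
      _ = ν (closure s ∩ D) := Measure.restrict_apply isClosed_closure.measurableSet
      _ ≤ _ := ?_
    rcases (closure s ∩ D).eq_empty_or_nonempty with he | ⟨x, hxs, hxD⟩
    · simp [he]
    have hρ : (ediam s).toReal < 1 / (n + 1 : ℝ) := by
      have h1 := ENNReal.toReal_mono ENNReal.ofReal_ne_top hs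
      rw [ENNReal.toReal_ofReal (by positivity)] at h1
      refine h1.trans_lt ?_
      gcongr
      have : (0 : ℝ) ≤ n := n.cast_nonneg
      linarith
    set ρ := (ediam s).toReal with hρdef
    -- let the radius decrease to the diameter, which may be zero
    have hlim : Tendsto (fun δ : ℝ => ENNReal.ofReal ((n + 1) * δ ^ κ)) (𝓝[>] ρ)
        (𝓝 (ENNReal.ofReal ((n + 1) * ρ ^ κ))) := by
      refine (ENNReal.tendsto_ofReal ?_)
      have : ContinuousAt (fun δ : ℝ => ((n : ℝ) + 1) * δ ^ κ) ρ :=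
        continuousAt_const.mul (Real.continuousAt_rpow_const _ _ (Or.inr hκ.le))
      exact this.tendsto.mono_left nhdsWithin_le_nhds
    have hle : ν (closure s ∩ D) ≤ ENNReal.ofReal ((n + 1) * ρ ^ κ) := by
      refine ge_of_tendsto hlim ?_
      filter_upwards [Ioc_mem_nhdsGT hρ] with δ hδ
      refine (measure_mono ?_).trans
        (hD x hxD δ (ENNReal.toReal_nonneg.trans_lt hδ.1) hδ.2)
      intro y hy
      rw [mem_closedBall, dist_edist]
      have h2 : edist y x ≤ ediam s := by
        rw [← ediam_closure]
        exact edist_le_ediam_of_mem hy.1 hxs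
      exact (ENNReal.toReal_mono hfin h2).trans hδ.1.le
    refine hle.trans (le_of_eq ?_)
    rw [ENNReal.ofReal_mul (by positivity), mul_comm,
      ← ENNReal.ofReal_rpow_of_nonneg ENNReal.toReal_nonneg hκ.le, ENNReal.ofReal_toReal hfin]
  intro N hN
  have h1 := le_antisymm ((key N).trans hN.le) zero_le
  rw [Measure.smul_apply, smul_eq_mul, mul_eq_zero] at h1
  exact h1.resolve_left (ENNReal.inv_ne_zero.2 ENNReal.ofReal_ne_top)

/-! ### Localization and assembly -/

theorem SolvesPDE.restrict {d : ℕ} {E F : Type*} [NormedAddCommGroup E] [InnerProductSpace ℝ E]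
    [NormedAddCommGroup F] [InnerProductSpace ℝ F]
    {Ω : Set (EuclideanSpace ℝ (Fin d))} {P₀ : E →ₗ[ℝ] F} {P : Fin d → E →ₗ[ℝ] F}
    {ν : Measure (EuclideanSpace ℝ (Fin d))} {g : EuclideanSpace ℝ (Fin d) → E}
    (h : SolvesPDE Ω P₀ P ν g) {B : Set (EuclideanSpace ℝ (Fin d))} (hB : B ⊆ Ω) :
    SolvesPDE B P₀ P (ν.restrict B) g := by
  intro φ hφ hc hs
  have h1 := h φ hφ hc (hs.trans hB)
  rw [setIntegral_eq_integral_of_forall_compl_eq_zero fun x hx => ?_]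
  · rw [← h1]
    refine Finset.sum_congr rfl fun i _ => ?_
    refine setIntegral_eq_integral_of_forall_compl_eq_zero fun x hx => ?_
    have : fderiv ℝ φ x = 0 := by
      by_contra hne
      exact hx (hs (support_fderiv_subset ℝ hne))
    simp [this]
  · rw [image_eq_zero_of_notMem_tsupport fun h => hx (hs h), inner_zero_right]

/-- At a Lebesgue point of the polar where it avoids the wave cone, `ν (closedBall y δ) = O(δ^κ)` for
every `κ < d`. A single integer `n` bounds both the constant and the inverse scale, which gives
countably many classes of points. -/
theorem exists_ball_le {d : ℕ} {E F : Type*} [NormedAddCommGroup E] [InnerProductSpace ℝ E]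
    [FiniteDimensional ℝ E] [NormedAddCommGroup F] [InnerProductSpace ℝ F]
    [FiniteDimensional ℝ F] {U : Set (EuclideanSpace ℝ (Fin d))} (hU : IsOpen U)
    {P₀ : E →ₗ[ℝ] F} {P : Fin d → E →ₗ[ℝ] F}
    {ν : Measure (EuclideanSpace ℝ (Fin d))} [IsFiniteMeasure ν]
    {g : EuclideanSpace ℝ (Fin d) → E} (hg : AEStronglyMeasurable g ν)
    (hpolar : ∀ᵐ x ∂ν, ‖g x‖ = 1) (hPDE : SolvesPDE U P₀ P ν g)
    {κ : ℝ} (hκ : 0 < κ) (hκd : κ < d) {y : EuclideanSpace ℝ (Fin d)} (hy : y ∈ U)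
    (hcone : g y ∉ waveCone P)
    (hleb : Tendsto (fun r => (∫⁻ z in closedBall y r, ‖g z - g y‖ₑ ∂ν) / ν (closedBall y r))
      (𝓝[>] 0) (𝓝 0)) :
    ∃ n : ℕ, ∀ δ, 0 < δ → δ ≤ 1 / (n + 1 : ℝ) →
      ν (closedBall y δ) ≤ ENNReal.ofReal ((n + 1) * δ ^ κ) := by
  obtain ⟨A, hA⟩ := exists_dual_of_notMem_waveCone P hcone
  obtain ⟨C, hC, hen⟩ := energy_bound P₀ P A
  have hdκ : 0 < d - κ := by linarith
  obtain ⟨ε, hε, hεle⟩ : ∃ ε : ℝ, 0 < ε ∧ C * (κ + 1) * ε = (d - κ) / 4 :=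
    ⟨(d - κ) / (4 * (C * (κ + 1))), by positivity, by field_simp⟩
  have hev : ∀ᶠ r in 𝓝[>] (0 : ℝ), (∫⁻ z in closedBall y r, ‖g z - g y‖ₑ ∂ν) / ν (closedBall y r)
      ≤ ENNReal.ofReal ε :=
    (hleb.eventually_lt_const (ENNReal.ofReal_pos.2 hε)).mono fun r hr => hr.le
  obtain ⟨r₁, hr₁, hosc⟩ := mem_nhdsGT_iff_exists_Ioc_subset.1 hev
  obtain ⟨r₂, hr₂, hsub⟩ := Metric.nhds_basis_closedBall.mem_iff.1 (hU.mem_nhds hy)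
  obtain ⟨r₀, hr₀, hr₀1, hr₀2, hr₀3⟩ : ∃ r₀ : ℝ, 0 < r₀ ∧ r₀ ≤ r₁ ∧ r₀ ≤ r₂ ∧
      r₀ ≤ (d - κ) / (4 * C) :=
    ⟨min r₁ (min r₂ ((d - κ) / (4 * C))), lt_min hr₁ (lt_min hr₂ (by positivity)),
      min_le_left _ _, (min_le_right _ _).trans (min_le_left _ _),
      (min_le_right _ _).trans (min_le_right _ _)⟩
  have hBU : closedBall y r₀ ⊆ U := (closedBall_subset_closedBall hr₀2).trans hsub
  have hCr : C * r₀ ≤ (d - κ) / 4 := by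
    rw [le_div_iff₀ (by positivity)] at hr₀3
    linarith
  obtain ⟨I₀, hI₀⟩ := hen y r₀ hr₀ (ν.restrict (closedBall y r₀))
    (by rw [Measure.restrict_apply isClosed_closedBall.measurableSet.compl]; simp)
    g hg.restrict (ae_restrict_of_ae hpolar) (hPDE.restrict hBU) (g y) hA ε hε.le
    (fun r h0 hr => by
      rw [Measure.restrict_restrict_of_subset (closedBall_subset_closedBall hr),
        Measure.restrict_eq_self _ (closedBall_subset_closedBall hr)]
      rcases h0.eq_or_lt with rfl | h0
      · simp
      · have h1 := hosc ⟨h0, hr.trans hr₀1⟩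
        exact (ENNReal.div_le_iff_le_mul (Or.inr ENNReal.ofReal_ne_top)
          (Or.inl (measure_ne_top _ _))).1 h1)
    κ hκ hκd (by linarith)
  obtain ⟨c, hc, hball⟩ := ball_le_of_energy_bound _ hκ hI₀
  obtain ⟨n, hn⟩ := exists_nat_gt (max c (1 / r₀))
  have hn1 : c ≤ n + 1 := by linarith [le_max_left c (1 / r₀)]
  have hn2 : 1 / (n + 1 : ℝ) ≤ r₀ := by
    rw [div_le_comm₀ (by positivity) hr₀]
    linarith [le_max_right c (1 / r₀)]
  refine ⟨n, fun δ hδ hδn => ?_⟩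
  have h1 := hball δ hδ
  rw [Measure.restrict_eq_self _ (closedBall_subset_closedBall (hδn.trans hn2))] at h1
  exact h1.trans (ENNReal.ofReal_le_ofReal (by gcongr))

theorem weak_structure_of_pos
    {d : ℕ} {E F : Type*} [NormedAddCommGroup E] [InnerProductSpace ℝ E] [FiniteDimensional ℝ E]
    [NormedAddCommGroup F] [InnerProductSpace ℝ F] [FiniteDimensional ℝ F]
    (Ω : Set (EuclideanSpace ℝ (Fin d))) (hΩ : IsOpen Ω)
    (P₀ : E →ₗ[ℝ] F) (P : Fin d → E →ₗ[ℝ] F)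
    (ν : Measure (EuclideanSpace ℝ (Fin d)))
    (hloc : ∀ K : Set (EuclideanSpace ℝ (Fin d)), K ⊆ Ω → IsCompact K → ν K < ⊤)
    (g : EuclideanSpace ℝ (Fin d) → E) (hg : AEStronglyMeasurable g ν)
    (hpolar : ∀ᵐ x ∂ν, ‖g x‖ = 1)
    (hPDE : SolvesPDE Ω P₀ P ν g) (κ : ℝ) (hκ : 0 < κ) (hκd : κ < (d : ℝ)) :
    ν.restrict {x ∈ Ω | g x ∉ waveCone P} ≪ μH[κ] := by
  refine Measure.AbsolutelyContinuous.mk fun N hN hN0 => ?_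
  rw [Measure.restrict_apply hN]
  -- `ν` may have infinite mass near the boundary of `Ω`, so work on balls compactly inside `Ω`
  refine measure_null_of_locally_null _ fun x hx => ?_
  obtain ⟨ρ, hρ, hsub⟩ := Metric.nhds_basis_closedBall.mem_iff.1 (hΩ.mem_nhds hx.2.1)
  refine ⟨_, inter_mem_nhdsWithin _ (ball_mem_nhds x hρ), ?_⟩
  rw [← Measure.restrict_apply' isOpen_ball.measurableSet]
  have hUΩ : ball x ρ ⊆ Ω := ball_subset_closedBall.trans hsub
  have hfin : IsFiniteMeasure (ν.restrict (ball x ρ)) :=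
    ⟨by
      rw [Measure.restrict_apply_univ]
      exact (measure_mono ball_subset_closedBall).trans_lt
        (hloc _ hsub (isCompact_closedBall x ρ))⟩
  have hmem : ∀ᵐ y ∂ν.restrict (ball x ρ), y ∈ ball x ρ := ae_restrict_mem isOpen_ball.measurableSet
  have hpde := hPDE.restrict hUΩ
  have hg' : AEStronglyMeasurable g (ν.restrict (ball x ρ)) := hg.restrict
  have hpolar' : ∀ᵐ y ∂ν.restrict (ball x ρ), ‖g y‖ = 1 := ae_restrict_of_ae hpolar
  generalize ν.restrict (ball x ρ) = m at *
  have hgint : Integrable g m := Integrable.of_bound hg' 1 (hpolar'.mono fun y hy => hy.le)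
  let D : ℕ → Set (EuclideanSpace ℝ (Fin d)) := fun n => {y | ∀ δ, 0 < δ → δ ≤ 1 / (n + 1 : ℝ) →
    m (closedBall y δ) ≤ ENNReal.ofReal ((n + 1) * δ ^ κ)}
  have hD : ∀ᵐ y ∂m, g y ∉ waveCone P → ∃ n, y ∈ D n := by
    filter_upwards [hmem,
      (Besicovitch.vitaliFamily m).ae_tendsto_lintegral_enorm_sub_div hgint.locallyIntegrable]
      with y hy hleb hcone
    exact exists_ball_le isOpen_ball hg' hpolar' hpde hκ hκd hy hcone
      (hleb.comp (Besicovitch.tendsto_filterAt m y))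
  have hsubset : N ∩ {y ∈ Ω | g y ∉ waveCone P} ⊆
      {y | ¬ (g y ∉ waveCone P → ∃ n, y ∈ D n)} ∪ ⋃ n, N ∩ D n := by
    rintro y ⟨hyN, -, hyc⟩
    by_cases h : ∃ n, y ∈ D n
    · obtain ⟨n, hn⟩ := h
      exact Or.inr (Set.mem_iUnion.2 ⟨n, hyN, hn⟩)
    · exact Or.inl fun h' => h (h' hyc)
  refine measure_mono_null hsubset (measure_union_null hD (measure_iUnion_null fun n => ?_))
  rw [← Measure.restrict_apply hN]
  exact restrict_absolutelyContinuous_hausdorff m hκ n (D n) (fun y hy => hy) hN0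

/-- **Weak structure theorem.** If the `E`-valued Radon measure `μ = g|μ|` on the open set
`Ω ⊆ ℝ^d` satisfies `P(D)μ = 0` in the sense of distributions, then the restriction of `|μ|` to
the set `{x ∈ Ω : g(x) ∉ Λ_P}` where the polar avoids the wave cone is absolutely continuous
with respect to `ℋ^κ` for every `0 ≤ κ < d`. -/
theorem weak_structure_theorem
    {d : ℕ} {E F : Type*} [NormedAddCommGroup E] [InnerProductSpace ℝ E] [FiniteDimensional ℝ E]
    [NormedAddCommGroup F] [InnerProductSpace ℝ F] [FiniteDimensional ℝ F]
    (Ω : Set (EuclideanSpace ℝ (Fin d))) (hΩ : IsOpen Ω)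
    (P₀ : E →ₗ[ℝ] F) (P : Fin d → E →ₗ[ℝ] F)
    (ν : Measure (EuclideanSpace ℝ (Fin d)))
    (hloc : ∀ K : Set (EuclideanSpace ℝ (Fin d)), K ⊆ Ω → IsCompact K → ν K < ⊤)
    (hsupp : ν Ωᶜ = 0)
    (g : EuclideanSpace ℝ (Fin d) → E) (hg : AEStronglyMeasurable g ν)
    (hpolar : ∀ᵐ x ∂ν, ‖g x‖ = 1)
    (hPDE : SolvesPDE Ω P₀ P ν g) :
    ∀ κ : ℝ, 0 ≤ κ → κ < (d : ℝ) →
      ν.restrict {x ∈ Ω | g x ∉ waveCone P} ≪ μH[κ] := by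
  intro κ hκ0 hκd
  rcases hκ0.eq_or_lt with rfl | hκ
  · -- a null set for `μH[0]` is also null for `μH[1/2]`, and `1/2 < d` since `d ≥ 1`
    have hd : (1 : ℝ) ≤ d := by
      have : 0 < d := by exact_mod_cast hκd
      exact_mod_cast this
    refine (weak_structure_of_pos Ω hΩ P₀ P ν hloc g hg hpolar hPDE (1 / 2) (by norm_num)
      (by linarith)).trans fun s hs => ?_
    exact le_antisymm ((Measure.hausdorffMeasure_mono (by norm_num) s).trans hs.le) zero_le
  · exact weak_structure_of_pos Ω hΩ P₀ P ν hloc g hg hpolar hPDE κ hκ hκd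
end

section
/- Let Ω ⊆ ℝ^d be open and let μ be a Radon measure on Ω with values in the space of k×d real matrices, satisfying Div μ = τ in the sense of distributions for some ℝ^k-valued Radon measure τ, i.e., for every smooth compactly supported ψ : Ω → ℝ^k, ∑_{i=1}^d ∫_Ω ∂_i ψ_j(x) d μ_{ij}(x) = −∫_Ω ψ_j dτ_j summed over j. Write μ = μ^{ac} L^d + g|μ^s| for the Lebesgue decomposition with polar g of the singular part, and let 1 ≤ ℓ ≤ d be an integer such that rank(g(x)) ≥ ℓ for |μ^s|-a.e. x ∈ Ω. Then |μ| ≪ H^κ for every 0 ≤ κ < ℓ; in particular dim_H(|μ|) ≥ ℓ. -/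
/-!
The absolutely continuous part is dominated by Lebesgue measure, hence by `μH[d]` and by `μH[κ]`.

For the singular part `νs`, the argument is a monotonicity formula at a typical point `x`, applied
to the regularised mass `I r = ∫ η(|y - x|² / r²) dνs(y)`. If `P = g x` has rank at least `ℓ`, there
is a matrix `B` such that `Pᵀ B` is the orthogonal projection onto the row space of `P`
(`exists_dual_matrix`). Testing the divergence equation with `η(|y - x|² / r²) B (y - x)`, and
freezing the polar at `P`, gives

  `ℓ I r - r I' r ≤ error`  (`smoothMass_inequality`),

because the trace of the projection is at least `ℓ`, its quadratic form is at most `|y|²`, and `η`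
is nonincreasing. By the Besicovitch differentiation theorem, at `νs`-a.e. `x` the error (the
oscillation of `g`, the absolutely continuous part, and `r |τ|`) is at most
`ε νs (closedBall x r) ≤ ε I (2 r)` for small `r`. The mass at the larger radius `2 r` is harmless,
without any doubling property: if `ε` is small compared with `ℓ - κ`, then `r ^ (-κ) I r` has no
positive maximum at small radii, hence stays bounded as `r → 0`
(`growth_of_differential_inequality`). So `νs (closedBall x r) = O(r ^ κ)` at `νs`-a.e. point,
and a covering argument yields `νs ≪ μH[κ]` (`absolutelyContinuous_hausdorff_of_ball_le`).

The density `h` is not assumed to be locally integrable; `exists_integrable_density` shows that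
this costs nothing.
-/

open MeasureTheory Metric Filter
open scoped ENNReal RealInnerProductSpace Topology

/-! ### The radial cutoff -/

/-- A smooth nonincreasing profile, equal to `1` on `(-∞, 1/2]` and to `0` on `[1, ∞)`. -/
noncomputable def cutoffProfile (t : ℝ) : ℝ := Real.smoothTransition (2 * (1 - t))

theorem cutoffProfile_contDiff : ContDiff ℝ (⊤ : ℕ∞) cutoffProfile :=
  Real.smoothTransition.contDiff.comp (by fun_prop)

theorem cutoffProfile_nonneg (t : ℝ) : 0 ≤ cutoffProfile t := Real.smoothTransition.nonneg _

theorem cutoffProfile_le_one (t : ℝ) : cutoffProfile t ≤ 1 := Real.smoothTransition.le_one _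

theorem cutoffProfile_of_one_le {t : ℝ} (ht : 1 ≤ t) : cutoffProfile t = 0 :=
  Real.smoothTransition.zero_of_nonpos (by linarith)

theorem cutoffProfile_of_le_half {t : ℝ} (ht : t ≤ 1 / 2) : cutoffProfile t = 1 :=
  Real.smoothTransition.one_of_one_le (by linarith)

theorem cutoffProfile_antitone : Antitone cutoffProfile := fun s t hst =>
  Real.smoothTransition.monotone (by linarith)

theorem cutoffProfile_hasDerivAt (t : ℝ) :
    HasDerivAt cutoffProfile (deriv cutoffProfile t) t :=
  (cutoffProfile_contDiff.differentiable (by simp) t).hasDerivAt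

theorem cutoffProfile_continuous_deriv : Continuous (deriv cutoffProfile) :=
  cutoffProfile_contDiff.continuous_deriv (by simp)

theorem deriv_cutoffProfile_nonpos (t : ℝ) : deriv cutoffProfile t ≤ 0 :=
  cutoffProfile_antitone.deriv_nonpos

theorem deriv_cutoffProfile_of_one_lt {t : ℝ} (ht : 1 < t) : deriv cutoffProfile t = 0 := by
  have : cutoffProfile =ᶠ[𝓝 t] fun _ => 0 := by
    filter_upwards [lt_mem_nhds ht] with s hs using cutoffProfile_of_one_le hs.le
  rw [this.deriv_eq]; simp

theorem deriv_cutoffProfile_of_lt_half {t : ℝ} (ht : t < 1 / 2) : deriv cutoffProfile t = 0 := by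
  have : cutoffProfile =ᶠ[𝓝 t] fun _ => 1 := by
    filter_upwards [gt_mem_nhds ht] with s hs using cutoffProfile_of_le_half hs.le
  rw [this.deriv_eq]; simp

theorem exists_bound_deriv_cutoffProfile :
    ∃ c : ℝ, 0 ≤ c ∧ ∀ t, |deriv cutoffProfile t| ≤ c := by
  obtain ⟨c, hc⟩ := isCompact_Icc.exists_bound_of_continuousOn (s := Set.Icc (0 : ℝ) 2)
    cutoffProfile_continuous_deriv.continuousOn
  have hc0 : 0 ≤ c := (norm_nonneg _).trans (hc 0 (by simp))
  refine ⟨c, hc0, fun t => ?_⟩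
  rcases lt_or_ge t 0 with h0 | h0
  · rw [deriv_cutoffProfile_of_lt_half (by linarith)]; simpa
  rcases le_or_gt t 2 with h2 | h2
  · exact hc t ⟨h0, h2⟩
  · rw [deriv_cutoffProfile_of_one_lt (by linarith)]; simpa

/-! ### Density bounds and Hausdorff measure -/

/-- An upper density bound `ν (closedBall x r) = O(r ^ κ)` at `ν`-a.e. point forces `ν ≪ μH[κ]`. -/
theorem absolutelyContinuous_hausdorff_of_ball_le {X : Type*} [MetricSpace X] [MeasurableSpace X]
    [BorelSpace X] (ν : Measure X) {κ : ℝ} (hκ : 0 ≤ κ)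
    (H : ∀ᵐ x ∂ν, ∃ C : ℝ, ∃ r₀ > 0, ∀ r, 0 < r → r < r₀ →
      ν (closedBall x r) ≤ ENNReal.ofReal (C * r ^ κ)) : ν ≪ μH[κ] := by
  intro S hS
  -- points at which the bound holds with constant `n + 1` up to scale `1 / (n + 1)`
  let T : ℕ → Set X := fun n => {x | ∀ r, 0 < r → r < 1 / ((n : ℝ) + 1) →
    ν (closedBall x r) ≤ ENNReal.ofReal (((n : ℝ) + 1) * r ^ κ)}
  have hcov : ν (⋃ n, T n)ᶜ = 0 := by
    rw [← mem_ae_iff]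
    filter_upwards [H] with x hx
    obtain ⟨C, r₀, hr₀, hx⟩ := hx
    obtain ⟨n, hn⟩ := exists_nat_ge (max C (1 / r₀))
    have h1 : C ≤ n := (le_max_left _ _).trans hn
    have h2 : 1 / r₀ ≤ n := (le_max_right _ _).trans hn
    refine Set.mem_iUnion.2 ⟨n, fun r hr hrn => (hx r hr ?_).trans (ENNReal.ofReal_le_ofReal ?_)⟩
    · refine hrn.trans_le ?_
      rw [div_le_comm₀ (by positivity) hr₀]; linarith
    · gcongr; linarith
  have hT : ∀ n, ν (S ∩ T n) = 0 := by
    intro n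
    have hn0 : (0 : ℝ) < n + 1 := by positivity
    have key : (ENNReal.ofReal ((n : ℝ) + 1))⁻¹ • ν.restrict (T n) ≤ μH[κ] := by
      refine Measure.le_hausdorffMeasure κ _ (ENNReal.ofReal (1 / (2 * ((n : ℝ) + 1))))
        (by simp; positivity) fun s hs => ?_
      rw [Measure.smul_apply, smul_eq_mul, mul_comm, ← div_eq_mul_inv]
      refine ENNReal.div_le_of_le_mul' ?_
      have h1 : ν.restrict (T n) s ≤ ν (closure s ∩ T n) := by
        rw [← Measure.restrict_apply isClosed_closure.measurableSet]
        exact measure_mono subset_closure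
      refine h1.trans ?_
      rcases (closure s ∩ T n).eq_empty_or_nonempty with he | ⟨x, hxs, hxT⟩
      · simp [he]
      have hfin : ediam s ≠ ⊤ := ne_top_of_le_ne_top ENNReal.ofReal_ne_top hs
      have hD : diam s ≤ 1 / (2 * ((n : ℝ) + 1)) :=
        ENNReal.toReal_le_of_le_ofReal (by positivity) hs
      have hD0 : 0 ≤ diam s := diam_nonneg
      have hDn : diam s < 1 / ((n : ℝ) + 1) := by
        refine hD.trans_lt ?_
        apply one_div_lt_one_div_of_lt <;> linarith
      have hbd : Bornology.IsBounded (closure s) := by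
        rw [isBounded_iff_ediam_ne_top, ediam_closure]; exact hfin
      have hsub : ∀ r, diam s < r → closure s ∩ T n ⊆ closedBall x r := by
        intro r hr y hy
        rw [mem_closedBall]
        refine (dist_le_diam_of_mem hbd hy.1 hxs).trans ?_
        rw [diam_closure]; exact hr.le
      have hle : ν (closure s ∩ T n) ≤ ENNReal.ofReal (((n : ℝ) + 1) * diam s ^ κ) := by
        have ht : Tendsto (fun r : ℝ => ENNReal.ofReal (((n : ℝ) + 1) * r ^ κ)) (𝓝[>] (diam s))
            (𝓝 (ENNReal.ofReal (((n : ℝ) + 1) * diam s ^ κ))) := by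
          have : Continuous fun r : ℝ => ENNReal.ofReal (((n : ℝ) + 1) * r ^ κ) :=
            ENNReal.continuous_ofReal.comp
              (continuous_const.mul (Real.continuous_rpow_const hκ))
          exact (this.tendsto _).mono_left nhdsWithin_le_nhds
        refine ge_of_tendsto ht ?_
        filter_upwards [Ioo_mem_nhdsGT hDn] with r hr
        exact (measure_mono (hsub r hr.1)).trans (hxT r (hD0.trans_lt hr.1) hr.2)
      refine hle.trans (le_of_eq ?_)
      rw [ENNReal.ofReal_mul hn0.le, ← ENNReal.ofReal_rpow_of_nonneg hD0 hκ]
      congr 2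
      exact ENNReal.ofReal_toReal hfin
    have h0 : (ENNReal.ofReal ((n : ℝ) + 1))⁻¹ * ν.restrict (T n) S = 0 := by
      have := key S
      rw [hS] at this
      simpa using this
    have h1 : ν.restrict (T n) S = 0 := by
      rcases mul_eq_zero.1 h0 with h | h
      · simp at h
      · exact h
    exact le_antisymm ((Measure.le_restrict_apply _ _).trans h1.le) zero_le
  refine measure_mono_null (t := (⋃ n, T n)ᶜ ∪ ⋃ n, S ∩ T n) ?_
    (measure_union_null hcov (measure_iUnion_null hT))
  intro x hx
  by_cases h : x ∈ ⋃ n, T n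
  · right
    obtain ⟨n, hn⟩ := Set.mem_iUnion.1 h
    exact Set.mem_iUnion.2 ⟨n, hx, hn⟩
  · exact Or.inl h

/-! ### The growth lemma -/

/-- A maximum principle for a differential inequality with advanced argument: with
`F r = r ^ (-κ) * I r`, the inequality `ℓ I r - r I' r ≤ e I (2r)` gives
`r F' r ≥ (ℓ - κ) F r - e 2 ^ κ F (2r)`, so that `F` cannot attain a positive maximum over
`[r₁, 2 r₀]` at a point of `[r₁, r₀)`. -/
theorem growth_of_differential_inequality {I I' : ℝ → ℝ} {r₀ κ ℓ e m : ℝ} (hr₀ : 0 < r₀)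
    (hκ : 0 ≤ κ) (he : 0 ≤ e) (hI : ∀ r, 0 < r → HasDerivAt I (I' r) r) (hI0 : ∀ r, 0 ≤ I r)
    (hIm : ∀ r, I r ≤ m)
    (hineq : ∀ r, 0 < r → r < r₀ → ℓ * I r - r * I' r ≤ e * I (2 * r))
    (hsmall : e * 2 ^ κ < ℓ - κ) :
    ∀ r, 0 < r → r < r₀ → I r ≤ m * r₀ ^ (-κ) * r ^ κ := by
  intro r₁ hr₁ hr₁₀
  let F : ℝ → ℝ := fun r => r ^ (-κ) * I r
  have hm : 0 ≤ m := (hI0 0).trans (hIm 0)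
  have hFd : ∀ r, 0 < r → HasDerivAt F ((-κ * r ^ (-κ - 1)) * I r + r ^ (-κ) * I' r) r :=
    fun r hr => (Real.hasDerivAt_rpow_const (Or.inl hr.ne')).mul (hI r hr)
  have hFc : ContinuousOn F (Set.Icc r₁ (2 * r₀)) := fun r hr =>
    (hFd r (hr₁.trans_le hr.1)).continuousAt.continuousWithinAt
  obtain ⟨s, hs, hmax⟩ := isCompact_Icc.exists_isMaxOn
    (Set.nonempty_Icc.2 (by linarith : r₁ ≤ 2 * r₀)) hFc
  have hs0 : 0 < s := hr₁.trans_le hs.1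
  have hle : F r₁ ≤ F s := hmax ⟨le_rfl, by linarith⟩
  have hFs : F s ≤ m * r₀ ^ (-κ) := by
    rcases le_or_gt r₀ s with h | h
    · rw [mul_comm m]
      exact mul_le_mul (Real.rpow_le_rpow_of_nonpos hr₀ h (by linarith)) (hIm s) (hI0 s)
        (by positivity)
    · have hd := hFd s hs0
      have hneg : (-κ * s ^ (-κ - 1)) * I s + s ^ (-κ) * I' s ≤ 0 := by
        have hcone : 2 * r₀ - s ∈ posTangentConeAt (Set.Icc r₁ (2 * r₀)) s :=
          sub_mem_posTangentConeAt_of_segment_subset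
            ((convex_Icc r₁ (2 * r₀)).segment_subset hs ⟨by linarith, le_rfl⟩)
        have h1 := (hmax.localize).hasFDerivWithinAt_nonpos
          hd.hasFDerivAt.hasFDerivWithinAt hcone
        simp only [ContinuousLinearMap.toSpanSingleton_apply, smul_eq_mul] at h1
        nlinarith
      have h2 : F (2 * s) ≤ F s := hmax ⟨by linarith [hs.1], by linarith⟩
      have h2e : F (2 * s) = 2 ^ (-κ) * (s ^ (-κ) * I (2 * s)) := by
        simp only [F]
        rw [Real.mul_rpow (by norm_num) hs0.le]; ring
      have h3 : s ^ (-κ) * I (2 * s) = 2 ^ κ * F (2 * s) := by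
        rw [h2e, ← mul_assoc, ← Real.rpow_add (by norm_num)]; simp
      have h4 : s ^ (-κ) * (ℓ * I s - s * I' s) ≤ e * (s ^ (-κ) * I (2 * s)) := by
        have := mul_le_mul_of_nonneg_left (hineq s hs0 h) (Real.rpow_nonneg hs0.le (-κ))
        linarith
      have h5 : s ^ (-κ - 1) * s = s ^ (-κ) := by
        rw [Real.rpow_sub_one hs0.ne']; field_simp
      have h6 : (ℓ - κ) * F s ≤ e * (2 ^ κ * F (2 * s)) := by
        rw [← h3]
        have h7 := mul_nonpos_of_nonpos_of_nonneg hneg hs0.le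
        have h8 : ((-κ * s ^ (-κ - 1)) * I s + s ^ (-κ) * I' s) * s
            = - κ * F s + s ^ (-κ) * (s * I' s) := by
          rw [← h5]; simp only [F]; rw [← h5]; ring
        have h9 : s ^ (-κ) * (ℓ * I s - s * I' s) = ℓ * F s - s ^ (-κ) * (s * I' s) := by
          simp only [F]; ring
        linarith
      have h10 : e * (2 ^ κ * F (2 * s)) ≤ (e * 2 ^ κ) * F s := by
        rw [mul_assoc]; gcongr
      have h11 : F s ≤ 0 := by
        by_contra! hp
        nlinarith
      exact h11.trans (by positivity)
  have h12 : I r₁ = F r₁ * r₁ ^ κ := by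
    simp only [F]
    rw [mul_comm, ← mul_assoc, ← Real.rpow_add hr₁]; simp
  rw [h12]
  gcongr
  exact hle.trans hFs

/-! ### Linear algebra of the polar -/

/-- For a `k × d` matrix `P` of rank at least `ℓ` there is `B` with `⟨B, P⟩ ≥ ℓ` (Frobenius
product) and `⟨P y, B y⟩ ≤ ‖y‖²`: take `B` such that `Pᵀ B` is the orthogonal projection onto the
row space of `P`. -/
theorem exists_dual_matrix {d k ℓ : ℕ} (P : Matrix (Fin k) (Fin d) ℝ) (hP : ℓ ≤ P.rank) :
    ∃ B : EuclideanSpace ℝ (Fin d) →L[ℝ] EuclideanSpace ℝ (Fin k),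
      (ℓ : ℝ) ≤ ∑ i, ∑ j, B (EuclideanSpace.single i 1) j * P j i ∧
      ∀ y : EuclideanSpace ℝ (Fin d), ∑ i, ∑ j, y i * B y j * P j i ≤ ‖y‖ ^ 2 := by
  let L := Matrix.toEuclideanLin P.transpose
  have hrank : Module.finrank ℝ (LinearMap.range L) = P.rank := by
    rw [← Matrix.rank_transpose P]
    rw [Matrix.rank_eq_finrank_range_toLin P.transpose (PiLp.basisFun 2 ℝ (Fin d))
      (PiLp.basisFun 2 ℝ (Fin k)), ← Matrix.toLpLin_eq_toLin]
  let w := stdOrthonormalBasis ℝ (LinearMap.range L)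
  have hb : ∀ a, ∃ b, L b = w a := fun a => (w a).2
  choose b hb using hb
  have hLb : ∀ v i, L v i = ∑ j, P j i * v j := by
    intro v i
    simp [L, Matrix.toLpLin_apply, Matrix.mulVec, dotProduct]
  let B : EuclideanSpace ℝ (Fin d) →L[ℝ] EuclideanSpace ℝ (Fin k) :=
    ∑ a, (innerSL ℝ (w a : EuclideanSpace ℝ (Fin d))).smulRight (b a)
  have hB : ∀ y j, B y j = ∑ a, ⟪(w a : EuclideanSpace ℝ (Fin d)), y⟫ * b a j := by
    intro y j
    simp [B]
  have hBP : ∀ y i, ∑ j, B y j * P j i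
      = ∑ a, ⟪(w a : EuclideanSpace ℝ (Fin d)), y⟫ * (w a : EuclideanSpace ℝ (Fin d)) i := by
    intro y i
    simp_rw [hB, ← hb, hLb, Finset.sum_mul, Finset.mul_sum]
    rw [Finset.sum_comm]
    refine Finset.sum_congr rfl fun a _ => Finset.sum_congr rfl fun j _ => by ring
  have hon : Orthonormal ℝ (fun a => (w a : EuclideanSpace ℝ (Fin d))) :=
    w.orthonormal.comp_linearIsometry (LinearMap.range L).subtypeₗᵢ
  refine ⟨B, ?_, fun y => ?_⟩
  · simp_rw [hBP]
    rw [Finset.sum_comm]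
    have : ∀ a, ∑ i, ⟪(w a : EuclideanSpace ℝ (Fin d)), EuclideanSpace.single i 1⟫
        * (w a : EuclideanSpace ℝ (Fin d)) i = 1 := by
      intro a
      have h1 := hon.1 a
      have h2 := EuclideanSpace.real_norm_sq_eq (w a : EuclideanSpace ℝ (Fin d))
      rw [h1] at h2
      simp only [EuclideanSpace.inner_single_right]
      simp only [one_pow] at h2
      exact (Finset.sum_congr rfl fun i _ => by simp [sq]).trans h2.symm
    simp_rw [this]
    simp [hrank]
    exact_mod_cast hP
  · have h1 : ∀ i, ∑ j, y i * B y j * P j i = y i * ∑ j, B y j * P j i := by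
      intro i; rw [Finset.mul_sum]; refine Finset.sum_congr rfl fun j _ => by ring
    simp_rw [h1, hBP, Finset.mul_sum]
    rw [Finset.sum_comm]
    have h2 : ∀ a, ∑ i, y i * (⟪(w a : EuclideanSpace ℝ (Fin d)), y⟫
        * (w a : EuclideanSpace ℝ (Fin d)) i) = ‖⟪(w a : EuclideanSpace ℝ (Fin d)), y⟫‖ ^ 2 := by
      intro a
      rw [Real.norm_eq_abs, sq_abs, sq]
      conv_rhs => enter [2]; rw [PiLp.inner_apply]
      rw [Finset.mul_sum]
      refine Finset.sum_congr rfl fun i _ => by simp; ring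
    simp_rw [h2]
    exact hon.sum_inner_products_le y

/-! ### Test fields and the monotonicity inequality -/

/-- The contraction `∑ᵢⱼ (D eᵢ)ⱼ Mⱼᵢ` of a linear map `D` with a `k × d` matrix `M`; for `D = Dψ`
it is the integrand of the distributional divergence. -/
noncomputable def contraction {d k : ℕ}
    (D : EuclideanSpace ℝ (Fin d) →L[ℝ] EuclideanSpace ℝ (Fin k))
    (M : EuclideanSpace ℝ (Fin k × Fin d)) : ℝ :=
  ∑ i : Fin d, ∑ j : Fin k, D (EuclideanSpace.single i 1) j * M (j, i)

theorem abs_contraction_le {d k : ℕ}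
    (D : EuclideanSpace ℝ (Fin d) →L[ℝ] EuclideanSpace ℝ (Fin k))
    (M : EuclideanSpace ℝ (Fin k × Fin d)) : |contraction D M| ≤ d * k * ‖D‖ * ‖M‖ := by
  have h1 : ∀ i j, |D (EuclideanSpace.single i 1) j * M (j, i)| ≤ ‖D‖ * ‖M‖ := by
    intro i j
    rw [abs_mul]
    have h2 : |D (EuclideanSpace.single i 1) j| ≤ ‖D‖ := by
      refine (PiLp.norm_apply_le (D (EuclideanSpace.single i 1)) j).trans ?_
      simpa using D.le_opNorm (EuclideanSpace.single i 1)
    exact mul_le_mul h2 (PiLp.norm_apply_le M (j, i)) (abs_nonneg _) (norm_nonneg _)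
  calc |contraction D M| ≤ ∑ i : Fin d, ∑ j : Fin k, ‖D‖ * ‖M‖ :=
        (Finset.abs_sum_le_sum_abs _ _).trans (Finset.sum_le_sum fun i _ =>
          (Finset.abs_sum_le_sum_abs _ _).trans (Finset.sum_le_sum fun j _ => h1 i j))
    _ = d * k * ‖D‖ * ‖M‖ := by simp; ring

theorem contraction_sub {d k : ℕ}
    (D : EuclideanSpace ℝ (Fin d) →L[ℝ] EuclideanSpace ℝ (Fin k))
    (M N : EuclideanSpace ℝ (Fin k × Fin d)) :
    contraction D (M - N) = contraction D M - contraction D N := by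
  simp [contraction, mul_sub]

/-- The radially cut-off linear field `η(|y - x|² / r²) B (y - x)`. -/
noncomputable def testField {d k : ℕ}
    (B : EuclideanSpace ℝ (Fin d) →L[ℝ] EuclideanSpace ℝ (Fin k)) (x : EuclideanSpace ℝ (Fin d))
    (r : ℝ) (y : EuclideanSpace ℝ (Fin d)) : EuclideanSpace ℝ (Fin k) :=
  cutoffProfile (‖y - x‖ ^ 2 / r ^ 2) • B (y - x)

section testField

variable {d k : ℕ} (B : EuclideanSpace ℝ (Fin d) →L[ℝ] EuclideanSpace ℝ (Fin k))
  (x : EuclideanSpace ℝ (Fin d))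

theorem testField_contDiff (r : ℝ) : ContDiff ℝ (⊤ : ℕ∞) (testField B x r) := by
  have h1 : ContDiff ℝ (⊤ : ℕ∞) fun y : EuclideanSpace ℝ (Fin d) => ‖y - x‖ ^ 2 / r ^ 2 :=
    ((contDiff_norm_sq ℝ).comp (contDiff_id.sub contDiff_const)).div_const _
  exact (cutoffProfile_contDiff.comp h1).smul
    (B.contDiff.comp (contDiff_id.sub contDiff_const))

theorem fderiv_testField (r : ℝ) (y v : EuclideanSpace ℝ (Fin d)) :
    fderiv ℝ (testField B x r) y v = cutoffProfile (‖y - x‖ ^ 2 / r ^ 2) • B v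
      + (deriv cutoffProfile (‖y - x‖ ^ 2 / r ^ 2) * (2 * ⟪y - x, v⟫ / r ^ 2)) • B (y - x) := by
  have h0 : HasFDerivAt (fun y : EuclideanSpace ℝ (Fin d) => y - x)
    (ContinuousLinearMap.id ℝ _) y := (hasFDerivAt_id y).sub_const x
  have h1 : HasFDerivAt (fun y : EuclideanSpace ℝ (Fin d) => ‖y - x‖ ^ 2 / r ^ 2)
      ((r ^ 2)⁻¹ • (2 • (innerSL ℝ (y - x)).comp (ContinuousLinearMap.id ℝ _))) y := by
    simp_rw [div_eq_inv_mul]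
    exact (h0.norm_sq).const_mul _
  have h2 := ((cutoffProfile_hasDerivAt (‖y - x‖ ^ 2 / r ^ 2)).comp_hasFDerivAt y h1).smul
    (B.hasFDerivAt.comp y h0)
  have h3 : fderiv ℝ (testField B x r) y = _ := HasFDerivAt.fderiv h2
  rw [h3]
  simp
  congr 1
  rw [inner_sub_left]
  ring

variable {r : ℝ}

theorem one_lt_of_not_mem (hr : 0 < r) {y : EuclideanSpace ℝ (Fin d)} (hy : y ∉ closedBall x r) :
    1 < ‖y - x‖ ^ 2 / r ^ 2 := by
  rw [mem_closedBall, dist_eq_norm, not_le] at hy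
  rw [one_lt_div (by positivity)]
  gcongr

theorem testField_eq_zero (hr : 0 < r) {y : EuclideanSpace ℝ (Fin d)}
    (hy : y ∉ closedBall x r) : testField B x r y = 0 := by
  simp [testField, cutoffProfile_of_one_le (one_lt_of_not_mem x hr hy).le]

theorem fderiv_testField_eq_zero (hr : 0 < r) {y : EuclideanSpace ℝ (Fin d)}
    (hy : y ∉ closedBall x r) : fderiv ℝ (testField B x r) y = 0 := by
  have h := one_lt_of_not_mem x hr hy
  ext v : 1
  simp [fderiv_testField, cutoffProfile_of_one_le h.le, deriv_cutoffProfile_of_one_lt h]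

theorem tsupport_testField (hr : 0 < r) : tsupport (testField B x r) ⊆ closedBall x r :=
  closure_minimal (fun _ hy => by_contra fun h => hy (testField_eq_zero B x hr h))
    isClosed_closedBall

theorem norm_testField_le {y : EuclideanSpace ℝ (Fin d)} (hy : y ∈ closedBall x r) :
    ‖testField B x r y‖ ≤ ‖B‖ * r := by
  rw [mem_closedBall, dist_eq_norm] at hy
  rw [testField, norm_smul, Real.norm_of_nonneg (cutoffProfile_nonneg _)]
  calc _ ≤ 1 * (‖B‖ * ‖y - x‖) := by
        gcongr
        exacts [cutoffProfile_le_one _, B.le_opNorm _]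
    _ ≤ _ := by rw [one_mul]; gcongr

theorem norm_fderiv_testField_le (hr : 0 < r) {c : ℝ} (hc : ∀ t, |deriv cutoffProfile t| ≤ c)
    {y : EuclideanSpace ℝ (Fin d)} (hy : y ∈ closedBall x r) :
    ‖fderiv ℝ (testField B x r) y‖ ≤ (1 + 2 * c) * ‖B‖ := by
  have hc0 : 0 ≤ c := (abs_nonneg _).trans (hc 0)
  rw [mem_closedBall, dist_eq_norm] at hy
  refine ContinuousLinearMap.opNorm_le_bound _ (by positivity) fun v => ?_
  rw [fderiv_testField]
  refine (norm_add_le _ _).trans ?_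
  rw [norm_smul, norm_smul, Real.norm_of_nonneg (cutoffProfile_nonneg _), norm_mul]
  have h1 : ‖2 * ⟪y - x, v⟫ / r ^ 2‖ ≤ 2 * (r * ‖v‖) / r ^ 2 := by
    rw [norm_div, norm_mul, Real.norm_of_nonneg (by positivity : 0 ≤ r ^ 2)]
    have := (norm_inner_le_norm (𝕜 := ℝ) (y - x) v).trans
      (mul_le_mul_of_nonneg_right hy (norm_nonneg v))
    simp only [Real.norm_ofNat]
    gcongr
  have h2 : ‖B (y - x)‖ ≤ ‖B‖ * r := (B.le_opNorm _).trans (by gcongr)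
  calc _ ≤ 1 * (‖B‖ * ‖v‖) + (c * (2 * (r * ‖v‖) / r ^ 2)) * (‖B‖ * r) := by
        gcongr
        exacts [cutoffProfile_le_one _, B.le_opNorm _, hc _]
    _ = _ := by field_simp

/-- With `B` dual to `P` in the sense of `exists_dual_matrix`, the contraction of `P` with the
derivative of the test field dominates the integrand of the monotonicity formula. -/
theorem le_contraction_fderiv_testField {ℓ : ℕ} (P : EuclideanSpace ℝ (Fin k × Fin d))
    (hB : (ℓ : ℝ) ≤ ∑ i, ∑ j, B (EuclideanSpace.single i 1) j * P (j, i))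
    (hB' : ∀ y : EuclideanSpace ℝ (Fin d), ∑ i, ∑ j, y i * B y j * P (j, i) ≤ ‖y‖ ^ 2)
    (y : EuclideanSpace ℝ (Fin d)) :
    ℓ * cutoffProfile (‖y - x‖ ^ 2 / r ^ 2)
      + 2 * (deriv cutoffProfile (‖y - x‖ ^ 2 / r ^ 2) * (‖y - x‖ ^ 2 / r ^ 2))
      ≤ contraction (fderiv ℝ (testField B x r) y) P := by
  set t := ‖y - x‖ ^ 2 / r ^ 2 with ht
  have h1 : contraction (fderiv ℝ (testField B x r) y) P
      = cutoffProfile t * (∑ i, ∑ j, B (EuclideanSpace.single i 1) j * P (j, i))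
        + 2 * deriv cutoffProfile t / r ^ 2
          * ∑ i, ∑ j, (y - x) i * B (y - x) j * P (j, i) := by
    simp only [contraction, fderiv_testField, Finset.mul_sum, ← Finset.sum_add_distrib]
    refine Finset.sum_congr rfl fun i _ => Finset.sum_congr rfl fun j _ => ?_
    simp only [← ht, PiLp.add_apply, PiLp.smul_apply, smul_eq_mul,
      EuclideanSpace.inner_single_right, one_mul, conj_trivial]
    ring
  have h2 := mul_le_mul_of_nonneg_left hB (cutoffProfile_nonneg t)
  have h3 : 2 * deriv cutoffProfile t / r ^ 2 ≤ 0 :=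
    div_nonpos_of_nonpos_of_nonneg (by linarith [deriv_cutoffProfile_nonpos t]) (by positivity)
  have h4 := mul_le_mul_of_nonpos_left (hB' (y - x)) h3
  have h5 : 2 * deriv cutoffProfile t / r ^ 2 * ‖y - x‖ ^ 2 = 2 * (deriv cutoffProfile t * t) := by
    rw [ht]; ring
  rw [h1]
  linarith

/-- The regularised mass `∫ η(|y - x|² / r²) dν(y)` of the ball of radius `r`. -/
noncomputable def smoothMass (ν : Measure (EuclideanSpace ℝ (Fin d))) (r : ℝ) : ℝ :=
  ∫ y, cutoffProfile (‖y - x‖ ^ 2 / r ^ 2) ∂ν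

theorem continuous_sq_div (r : ℝ) :
    Continuous fun y : EuclideanSpace ℝ (Fin d) => ‖y - x‖ ^ 2 / r ^ 2 := by fun_prop

theorem integrable_cutoffProfile (ν : Measure (EuclideanSpace ℝ (Fin d))) [IsFiniteMeasure ν]
    (r : ℝ) : Integrable (fun y => cutoffProfile (‖y - x‖ ^ 2 / r ^ 2)) ν := by
  refine Integrable.of_bound
    (cutoffProfile_contDiff.continuous.comp (continuous_sq_div x r)).aestronglyMeasurable 1
    (Eventually.of_forall fun y => ?_)
  rw [Real.norm_of_nonneg (cutoffProfile_nonneg _)]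
  exact cutoffProfile_le_one _

theorem smoothMass_nonneg (ν : Measure (EuclideanSpace ℝ (Fin d))) (r : ℝ) :
    0 ≤ smoothMass x ν r := integral_nonneg fun _ => cutoffProfile_nonneg _

theorem smoothMass_le (ν : Measure (EuclideanSpace ℝ (Fin d))) [IsFiniteMeasure ν] (r : ℝ) :
    smoothMass x ν r ≤ ν.real Set.univ := by
  calc smoothMass x ν r ≤ ∫ _, (1 : ℝ) ∂ν := integral_mono (integrable_cutoffProfile x ν r)
        (integrable_const _) fun _ => cutoffProfile_le_one _
    _ = _ := by simp

theorem measureReal_closedBall_le_smoothMass (ν : Measure (EuclideanSpace ℝ (Fin d)))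
    [IsFiniteMeasure ν] (hr : 0 < r) : ν.real (closedBall x r) ≤ smoothMass x ν (2 * r) := by
  rw [← integral_indicator_one measurableSet_closedBall]
  refine integral_mono ((integrable_const (1 : ℝ)).indicator measurableSet_closedBall)
    (integrable_cutoffProfile x ν _) fun y => ?_
  by_cases hy : y ∈ closedBall x r
  · rw [Set.indicator_of_mem hy, cutoffProfile_of_le_half]; · rfl
    rw [mem_closedBall, dist_eq_norm] at hy
    rw [div_le_iff₀ (by positivity)]
    nlinarith [norm_nonneg (y - x)]
  · rw [Set.indicator_of_notMem hy]; exact cutoffProfile_nonneg _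

theorem abs_deriv_cutoffProfile_mul_le {c : ℝ} (hc : ∀ t, |deriv cutoffProfile t| ≤ c) {t : ℝ}
    (ht : 0 ≤ t) : |deriv cutoffProfile t * t| ≤ c := by
  have hc0 : 0 ≤ c := (abs_nonneg _).trans (hc 0)
  rcases le_or_gt t 1 with h | h
  · rw [abs_mul, abs_of_nonneg ht]
    exact (mul_le_mul (hc t) h ht hc0).trans (by simp)
  · rw [deriv_cutoffProfile_of_one_lt h]; simpa

theorem integrable_deriv_cutoffProfile (ν : Measure (EuclideanSpace ℝ (Fin d)))
    [IsFiniteMeasure ν] (r : ℝ) : Integrable (fun y =>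
      deriv cutoffProfile (‖y - x‖ ^ 2 / r ^ 2) * (‖y - x‖ ^ 2 / r ^ 2)) ν := by
  obtain ⟨c, -, hc⟩ := exists_bound_deriv_cutoffProfile
  exact Integrable.of_bound ((cutoffProfile_continuous_deriv.comp (continuous_sq_div x r)).mul
    (continuous_sq_div x r)).aestronglyMeasurable c
    (Eventually.of_forall fun y => abs_deriv_cutoffProfile_mul_le hc (by positivity))

theorem hasDerivAt_smoothMass (ν : Measure (EuclideanSpace ℝ (Fin d))) [IsFiniteMeasure ν]
    (hr : 0 < r) : HasDerivAt (smoothMass x ν)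
      (-(2 / r) * ∫ y, deriv cutoffProfile (‖y - x‖ ^ 2 / r ^ 2) * (‖y - x‖ ^ 2 / r ^ 2) ∂ν) r := by
  obtain ⟨c, hc0, hc⟩ := exists_bound_deriv_cutoffProfile
  rw [← integral_const_mul]
  refine (hasDerivAt_integral_of_dominated_loc_of_deriv_le (μ := ν) (s := Set.Ioi (r / 2))
    (F := fun s y => cutoffProfile (‖y - x‖ ^ 2 / s ^ 2))
    (F' := fun s y =>
      -(2 / s) * (deriv cutoffProfile (‖y - x‖ ^ 2 / s ^ 2) * (‖y - x‖ ^ 2 / s ^ 2)))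
    (bound := fun _ => 4 / r * c)
    (Ioi_mem_nhds (by linarith)) (Eventually.of_forall fun s =>
      (integrable_cutoffProfile x ν s).aestronglyMeasurable) (integrable_cutoffProfile x ν r)
    ((integrable_deriv_cutoffProfile x ν r).const_mul _).aestronglyMeasurable
    (Eventually.of_forall fun y s hs => ?_) (integrable_const _)
    (Eventually.of_forall fun y s hs => ?_)).2
  · have hs' : r / 2 < s := hs
    have hs0 : 0 < s := by linarith
    rw [norm_mul]
    have h1 : ‖-(2 / s)‖ ≤ 4 / r := by
      rw [norm_neg, Real.norm_of_nonneg (by positivity), div_le_div_iff₀ hs0 hr]; linarith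
    exact mul_le_mul h1 (abs_deriv_cutoffProfile_mul_le hc (by positivity)) (norm_nonneg _)
      (by positivity)
  · have hs' : r / 2 < s := hs
    have hs0 : 0 < s := by linarith
    have h1 : HasDerivAt (fun s : ℝ => ‖y - x‖ ^ 2 / s ^ 2)
        (-(2 / s) * (‖y - x‖ ^ 2 / s ^ 2)) s := by
      have := ((hasDerivAt_pow 2 s).fun_inv (by positivity)).const_mul (‖y - x‖ ^ 2)
      simp_rw [div_eq_mul_inv (‖y - x‖ ^ 2)]
      convert! this using 1
      field_simp
      simp
      ring
    have h2 := (cutoffProfile_hasDerivAt (‖y - x‖ ^ 2 / s ^ 2)).comp s h1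
    convert! h2 using 1
    ring

end testField

/-- Bound for the integral of a function supported in `S` and dominated there by `K ‖F‖`; no
integrability is needed, since a non-integrable function has integral `0`. -/
theorem abs_integral_le_of_dominated {X G : Type*} [MeasurableSpace X] [NormedAddCommGroup G]
    {μ : Measure X} {f : X → ℝ} {F : X → G} {S : Set X} (hS : MeasurableSet S) {K s : ℝ}
    (hK : 0 ≤ K) (hs : 0 ≤ s) (h0 : ∀ y, y ∉ S → f y = 0) (h1 : ∀ y ∈ S, |f y| ≤ K * ‖F y‖)
    (h : ∫⁻ y in S, ‖F y‖ₑ ∂μ ≤ ENNReal.ofReal s) : |∫ y, f y ∂μ| ≤ K * s := by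
  have h2 : ‖∫ y, f y ∂μ‖ₑ ≤ ENNReal.ofReal (K * s) := by
    calc ‖∫ y, f y ∂μ‖ₑ ≤ ∫⁻ y, ‖f y‖ₑ ∂μ := enorm_integral_le_lintegral_enorm _
      _ ≤ ∫⁻ y, S.indicator (fun y => ENNReal.ofReal K * ‖F y‖ₑ) y ∂μ := by
          refine lintegral_mono fun y => ?_
          by_cases hy : y ∈ S
          · rw [Set.indicator_of_mem hy, ← ofReal_norm, ← ofReal_norm,
              ← ENNReal.ofReal_mul hK]
            exact ENNReal.ofReal_le_ofReal (h1 y hy)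
          · simp [h0 y hy]
      _ = ENNReal.ofReal K * ∫⁻ y in S, ‖F y‖ₑ ∂μ := by
          rw [lintegral_indicator hS, lintegral_const_mul' _ _ ENNReal.ofReal_ne_top]
      _ ≤ ENNReal.ofReal (K * s) := by
          rw [ENNReal.ofReal_mul hK]; gcongr
  rw [← ofReal_norm, ENNReal.ofReal_le_ofReal_iff (by positivity)] at h2
  exact h2

/-- The monotonicity inequality `ℓ I - r I' ≤ error` at a point `x` where the polar is `P`. -/
theorem smoothMass_inequality {d k ℓ : ℕ} (ν : Measure (EuclideanSpace ℝ (Fin d)))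
    [IsFiniteMeasure ν] (x : EuclideanSpace ℝ (Fin d))
    (g : EuclideanSpace ℝ (Fin d) → EuclideanSpace ℝ (Fin k × Fin d)) (hg : Integrable g ν)
    (P : EuclideanSpace ℝ (Fin k × Fin d))
    (B : EuclideanSpace ℝ (Fin d) →L[ℝ] EuclideanSpace ℝ (Fin k))
    (hB : (ℓ : ℝ) ≤ ∑ i, ∑ j, B (EuclideanSpace.single i 1) j * P (j, i))
    (hB' : ∀ y : EuclideanSpace ℝ (Fin d), ∑ i, ∑ j, y i * B y j * P (j, i) ≤ ‖y‖ ^ 2)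
    {c : ℝ} (hc : ∀ t, |deriv cutoffProfile t| ≤ c) {r s : ℝ} (hr : 0 < r) (hs : 0 ≤ s)
    (hosc : ∫⁻ y in closedBall x r, ‖g y - P‖ₑ ∂ν ≤ ENNReal.ofReal s) :
    ℓ * smoothMass x ν r - r * (-(2 / r) *
        ∫ y, deriv cutoffProfile (‖y - x‖ ^ 2 / r ^ 2) * (‖y - x‖ ^ 2 / r ^ 2) ∂ν)
      ≤ (∫ y, contraction (fderiv ℝ (testField B x r) y) (g y) ∂ν)
        + d * k * ((1 + 2 * c) * ‖B‖) * s := by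
  have hc0 : 0 ≤ c := (abs_nonneg _).trans (hc 0)
  have hcont : Continuous (fderiv ℝ (testField B x r)) :=
    (testField_contDiff B x r).continuous_fderiv (by simp)
  have hDle : ∀ y, ‖fderiv ℝ (testField B x r) y‖ ≤ (1 + 2 * c) * ‖B‖ := by
    intro y
    by_cases hy : y ∈ closedBall x r
    · exact norm_fderiv_testField_le B x hr hc hy
    · rw [fderiv_testField_eq_zero B x hr hy, norm_zero]; positivity
  have hInt : ∀ G : EuclideanSpace ℝ (Fin d) → EuclideanSpace ℝ (Fin k × Fin d),
      Integrable G ν →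
      Integrable (fun y => contraction (fderiv ℝ (testField B x r) y) (G y)) ν := by
    intro G hG
    refine Integrable.mono' (hG.norm.const_mul (d * k * ((1 + 2 * c) * ‖B‖))) ?_
      (Eventually.of_forall fun y => (abs_contraction_le _ _).trans ?_)
    · refine Finset.aestronglyMeasurable_fun_sum _ fun i _ =>
        Finset.aestronglyMeasurable_fun_sum _ fun j _ => ?_
      refine AEStronglyMeasurable.mul ?_ ?_
      · have : Continuous fun y => fderiv ℝ (testField B x r) y (EuclideanSpace.single i 1) j := by
          fun_prop
        exact this.aestronglyMeasurable
      · exact (EuclideanSpace.proj (𝕜 := ℝ) (j, i)).continuous.comp_aestronglyMeasurable hG.1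
    · gcongr; exact hDle y
  have h1 : ℓ * smoothMass x ν r - r * (-(2 / r) *
        ∫ y, deriv cutoffProfile (‖y - x‖ ^ 2 / r ^ 2) * (‖y - x‖ ^ 2 / r ^ 2) ∂ν)
      = ∫ y, (ℓ * cutoffProfile (‖y - x‖ ^ 2 / r ^ 2)
      + 2 * (deriv cutoffProfile (‖y - x‖ ^ 2 / r ^ 2) * (‖y - x‖ ^ 2 / r ^ 2))) ∂ν := by
    rw [integral_add ((integrable_cutoffProfile x ν r).const_mul _)
      ((integrable_deriv_cutoffProfile x ν r).const_mul _), integral_const_mul,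
      integral_const_mul, smoothMass]
    field_simp
    ring
  have h2 : ∫ y, (ℓ * cutoffProfile (‖y - x‖ ^ 2 / r ^ 2)
      + 2 * (deriv cutoffProfile (‖y - x‖ ^ 2 / r ^ 2) * (‖y - x‖ ^ 2 / r ^ 2))) ∂ν
      ≤ ∫ y, contraction (fderiv ℝ (testField B x r) y) P ∂ν :=
    integral_mono (((integrable_cutoffProfile x ν r).const_mul _).add
      ((integrable_deriv_cutoffProfile x ν r).const_mul _)) (hInt _ (integrable_const P))
      fun y => le_contraction_fderiv_testField B x P hB hB' y
  have h3 : |∫ y, contraction (fderiv ℝ (testField B x r) y) (g y - P) ∂ν|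
      ≤ d * k * ((1 + 2 * c) * ‖B‖) * s := by
    refine abs_integral_le_of_dominated measurableSet_closedBall (by positivity) hs
      (fun y hy => ?_) (fun y _ => (abs_contraction_le _ _).trans ?_) hosc
    · rw [fderiv_testField_eq_zero B x hr hy]; simp [contraction]
    · gcongr; exact hDle y
  have h4 : ∫ y, contraction (fderiv ℝ (testField B x r) y) (g y - P) ∂ν
      = (∫ y, contraction (fderiv ℝ (testField B x r) y) (g y) ∂ν)
        - ∫ y, contraction (fderiv ℝ (testField B x r) y) P ∂ν := by
    simp_rw [contraction_sub]
    exact integral_sub (hInt _ hg) (hInt _ (integrable_const P))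
  rw [h4] at h3
  rw [h1]
  linarith [(abs_le.1 h3).1]

/-! ### Test functions and local integrability of the data -/

/-- The space of test fields on `Ω`. -/
def IsTestField {d k : ℕ} (Ω : Set (EuclideanSpace ℝ (Fin d)))
    (ψ : EuclideanSpace ℝ (Fin d) → EuclideanSpace ℝ (Fin k)) : Prop :=
  ContDiff ℝ (⊤ : ℕ∞) ψ ∧ HasCompactSupport ψ ∧ tsupport ψ ⊆ Ω

theorem IsTestField.add {d k : ℕ} {Ω : Set (EuclideanSpace ℝ (Fin d))}
    {ψ φ : EuclideanSpace ℝ (Fin d) → EuclideanSpace ℝ (Fin k)} (hψ : IsTestField Ω ψ)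
    (hφ : IsTestField Ω φ) : IsTestField Ω (ψ + φ) :=
  ⟨hψ.1.add hφ.1, hψ.2.1.add hφ.2.1,
    (tsupport_add ψ φ).trans (Set.union_subset hψ.2.2 hφ.2.2)⟩

/-- The density `h` may be assumed to pair integrably with every test field. If it does not,
then the additive functional `T` vanishes on a test field `ψ₀` with `⟪ψ₀, h⟫` not integrable and,
for `⟪ψ, h⟫` integrable, on `ψ + ψ₀` as well (the Bochner integral of a non-integrable function is
`0`), so that `T = 0` and `h` can be replaced by `0`. -/
theorem exists_integrable_density {d k : ℕ} {Ω : Set (EuclideanSpace ℝ (Fin d))}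
    {ρ : Measure (EuclideanSpace ℝ (Fin d))}
    {h : EuclideanSpace ℝ (Fin d) → EuclideanSpace ℝ (Fin k)} (hh : AEStronglyMeasurable h ρ)
    (T : (EuclideanSpace ℝ (Fin d) → EuclideanSpace ℝ (Fin k)) → ℝ)
    (hTadd : ∀ ψ φ, IsTestField Ω ψ → IsTestField Ω φ → T (ψ + φ) = T ψ + T φ)
    (hT : ∀ ψ, IsTestField Ω ψ → T ψ = -∫ x, ⟪ψ x, h x⟫ ∂ρ) :
    ∃ h' : EuclideanSpace ℝ (Fin d) → EuclideanSpace ℝ (Fin k), AEStronglyMeasurable h' ρ ∧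
      (∀ ψ, IsTestField Ω ψ → Integrable (fun x => ⟪ψ x, h' x⟫) ρ) ∧
      ∀ ψ, IsTestField Ω ψ → T ψ = -∫ x, ⟪ψ x, h' x⟫ ∂ρ := by
  by_cases hall : ∀ ψ, IsTestField Ω ψ → Integrable (fun x => ⟪ψ x, h x⟫) ρ
  · exact ⟨h, hh, hall, hT⟩
  push Not at hall
  obtain ⟨ψ₀, hψ₀, hn⟩ := hall
  refine ⟨fun _ => 0, aestronglyMeasurable_const, fun ψ _ => by simp, fun ψ hψ => ?_⟩
  have h0 : ∀ φ, IsTestField Ω φ → ¬ Integrable (fun x => ⟪φ x, h x⟫) ρ → T φ = 0 := by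
    intro φ hφ hni
    rw [hT φ hφ, integral_undef hni, neg_zero]
  simp only [inner_zero_right, integral_zero, neg_zero]
  by_cases hi : Integrable (fun x => ⟪ψ x, h x⟫) ρ
  · have h1 : T (ψ + ψ₀) = 0 := by
      refine h0 _ (hψ.add hψ₀) fun h2 => hn ?_
      have := h2.sub hi
      refine this.congr (Eventually.of_forall fun x => ?_)
      simp [inner_add_left]
    rw [hTadd _ _ hψ hψ₀, h0 _ hψ₀ hn] at h1
    linarith
  · exact h0 _ hψ hi

/-- A density pairing integrably with test fields is integrable on small balls. -/
theorem lintegral_enorm_lt_top_of_test {d k : ℕ} {Ω : Set (EuclideanSpace ℝ (Fin d))}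
    {ρ : Measure (EuclideanSpace ℝ (Fin d))}
    {h : EuclideanSpace ℝ (Fin d) → EuclideanSpace ℝ (Fin k)}
    (hh : ∀ ψ, IsTestField Ω ψ → Integrable (fun x => ⟪ψ x, h x⟫) ρ)
    {c : EuclideanSpace ℝ (Fin d)} {R : ℝ} (hR : 0 < R) (hc : closedBall c (2 * R) ⊆ Ω) :
    ∫⁻ x in ball c R, ‖h x‖ₑ ∂ρ < ⊤ := by
  let f : ContDiffBump c := ⟨R, 2 * R, hR, by linarith⟩
  have hj : ∀ j, IntegrableOn (fun x => h x j) (ball c R) ρ := by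
    intro j
    have htest : IsTestField Ω (fun x => f x • (EuclideanSpace.single j 1 :
        EuclideanSpace ℝ (Fin k))) := by
      have hsub : tsupport (fun x => f x • (EuclideanSpace.single j 1 :
          EuclideanSpace ℝ (Fin k))) ⊆ tsupport f :=
        tsupport_smul_subset_left f _
      refine ⟨f.contDiff.smul contDiff_const, f.hasCompactSupport.smul_right, hsub.trans ?_⟩
      rw [f.tsupport_eq]; exact hc
    refine (hh _ htest).integrableOn.congr_fun (fun x hx => ?_) measurableSet_ball
    have : f x = 1 := f.one_of_mem_closedBall (ball_subset_closedBall hx)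
    simp [this, EuclideanSpace.inner_single_left]
  have hInt : IntegrableOn h (ball c R) ρ := by
    have h1 : IntegrableOn (fun x => ∑ j, h x j • (EuclideanSpace.single j 1 :
        EuclideanSpace ℝ (Fin k))) (ball c R) ρ :=
      integrable_finsetSum _ fun j _ => (hj j).smul_const _
    refine h1.congr (Eventually.of_forall fun x => ?_)
    ext i
    simp [Pi.single_apply]
  exact hInt.2

theorem integrable_fderiv_mul {d k : ℕ} {Ω : Set (EuclideanSpace ℝ (Fin d))}
    {μ : Measure (EuclideanSpace ℝ (Fin d))}
    {G : EuclideanSpace ℝ (Fin d) → EuclideanSpace ℝ (Fin k × Fin d)}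
    (hG : ∀ K, K ⊆ Ω → IsCompact K → IntegrableOn G K μ)
    {ψ : EuclideanSpace ℝ (Fin d) → EuclideanSpace ℝ (Fin k)} (hψ : IsTestField Ω ψ)
    (i : Fin d) (j : Fin k) :
    Integrable (fun x => fderiv ℝ ψ x (EuclideanSpace.single i 1) j * G x (j, i)) μ := by
  have hcont : Continuous (fderiv ℝ ψ) := hψ.1.continuous_fderiv (by simp)
  have hc' : Continuous fun x => fderiv ℝ ψ x (EuclideanSpace.single i 1) j := by fun_prop
  have hK : IsCompact (tsupport ψ) := hψ.2.1
  have h1 : IntegrableOn (fun x => G x (j, i)) (tsupport ψ) μ :=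
    (EuclideanSpace.proj (𝕜 := ℝ) (j, i)).integrable_comp (hG _ hψ.2.2 hK)
  refine (integrableOn_iff_integrable_of_support_subset fun x hx => ?_).1
    (h1.continuousOn_mul hc'.continuousOn hK)
  by_contra hn
  refine hx ?_
  have : fderiv ℝ ψ x = 0 := by
    by_contra h0
    exact hn (tsupport_fderiv_subset ℝ (subset_tsupport _ h0))
  simp [this]

theorem eventually_measure_le_of_ratio {d : ℕ} {ν : Measure (EuclideanSpace ℝ (Fin d))}
    [IsFiniteMeasure ν] {x : EuclideanSpace ℝ (Fin d)} {l : ℝ≥0∞}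
    {φ : Set (EuclideanSpace ℝ (Fin d)) → ℝ≥0∞}
    (h : Tendsto (fun r => φ (closedBall x r) / ν (closedBall x r)) (𝓝[>] 0) (𝓝 l)) {b : ℝ}
    (hb : l < ENNReal.ofReal b) : ∀ᶠ r in 𝓝[>] (0 : ℝ),
      φ (closedBall x r) ≤ ENNReal.ofReal (b * ν.real (closedBall x r)) := by
  have hb0 : 0 < b := by
    by_contra! h0
    rw [ENNReal.ofReal_of_nonpos h0] at hb
    exact not_lt_bot hb
  filter_upwards [h.eventually (gt_mem_nhds hb)] with r hr
  rw [ENNReal.ofReal_mul hb0.le, ofReal_measureReal]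
  exact (ENNReal.div_le_iff_le_mul (Or.inr ENNReal.ofReal_ne_top)
    (Or.inl (measure_ne_top _ _))).1 hr.le

/-! ### The singular part -/

/-- Upper density bound at a point `x` where the polar has rank at least `ℓ`, is approximately
continuous, and where `A` and `τ = h ρ` do not concentrate relative to `ν`. -/
theorem closedBall_le_of_polar {d k ℓ : ℕ} {U : Set (EuclideanSpace ℝ (Fin d))} (hU : IsOpen U)
    (α ρ ν : Measure (EuclideanSpace ℝ (Fin d))) [IsFiniteMeasure ν]
    (A g : EuclideanSpace ℝ (Fin d) → EuclideanSpace ℝ (Fin k × Fin d))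
    (h : EuclideanSpace ℝ (Fin d) → EuclideanSpace ℝ (Fin k)) (hg : Integrable g ν)
    (hdiv : ∀ ψ, IsTestField U ψ →
      (∫ y, contraction (fderiv ℝ ψ y) (A y) ∂α) + ∫ y, contraction (fderiv ℝ ψ y) (g y) ∂ν
        = -∫ y, ⟪ψ y, h y⟫ ∂ρ)
    {x : EuclideanSpace ℝ (Fin d)} (hx : x ∈ U)
    (hrank : ℓ ≤ (Matrix.of fun j i => g x (j, i) : Matrix (Fin k) (Fin d) ℝ).rank)
    (hA : Tendsto (fun r => (∫⁻ y in closedBall x r, ‖A y‖ₑ ∂α) / ν (closedBall x r)) (𝓝[>] 0)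
      (𝓝 0))
    (hosc : Tendsto (fun r => (∫⁻ y in closedBall x r, ‖g y - g x‖ₑ ∂ν) / ν (closedBall x r))
      (𝓝[>] 0) (𝓝 0))
    {l : ℝ≥0∞} (hl : l < ⊤)
    (hτ : Tendsto (fun r => (∫⁻ y in closedBall x r, ‖h y‖ₑ ∂ρ) / ν (closedBall x r)) (𝓝[>] 0)
      (𝓝 l))
    {κ : ℝ} (hκ : 0 ≤ κ) (hκℓ : κ < ℓ) :
    ∃ C : ℝ, ∃ r₀ > 0, ∀ r, 0 < r → r < r₀ →
      ν (closedBall x r) ≤ ENNReal.ofReal (C * r ^ κ) := by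
  obtain ⟨B, hB, hB'⟩ := exists_dual_matrix _ hrank
  simp only [Matrix.of_apply] at hB hB'
  obtain ⟨c, hc0, hc⟩ := exists_bound_deriv_cutoffProfile
  set K : ℝ := d * k * ((1 + 2 * c) * ‖B‖) with hKdef
  have hK : 0 ≤ K := by positivity
  -- `ε` is chosen so that the total error `(2 K + ‖B‖) ε` is admissible in the growth lemma
  obtain ⟨ε, hε, hεs⟩ : ∃ ε : ℝ, 0 < ε ∧ ((2 * K + ‖B‖) * ε) * 2 ^ κ < ℓ - κ := by
    refine ⟨(ℓ - κ) / (2 * ((2 * K + ‖B‖ + 1) * 2 ^ κ)), by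
      have : 0 < ℓ - κ := by linarith
      positivity, ?_⟩
    have h1 : 0 < ℓ - κ := by linarith
    have h2 : (0 : ℝ) < 2 ^ κ := by positivity
    have h3 : (0 : ℝ) ≤ ‖B‖ := norm_nonneg _
    rw [mul_assoc, div_mul_eq_mul_div, mul_div_assoc', div_lt_iff₀ (by positivity)]
    have h4 : 0 < (ℓ - κ) * 2 ^ κ := by positivity
    nlinarith [mul_nonneg hK h4.le, mul_nonneg h3 h4.le]
  have hε' : (0 : ℝ≥0∞) < ENNReal.ofReal ε := by simpa
  have e1 := eventually_measure_le_of_ratio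
    (φ := fun S => ∫⁻ y in S, ‖A y‖ₑ ∂α) hA hε'
  have e2 := eventually_measure_le_of_ratio
    (φ := fun S => ∫⁻ y in S, ‖g y - g x‖ₑ ∂ν) hosc hε'
  have e3 := eventually_measure_le_of_ratio (b := l.toReal + 1)
    (φ := fun S => ∫⁻ y in S, ‖h y‖ₑ ∂ρ) hτ (by
      rw [ENNReal.lt_ofReal_iff_toReal_lt hl.ne]; linarith)
  have e4 : ∀ᶠ r in 𝓝[>] (0 : ℝ), r * (l.toReal + 1) < ε := by
    have : Tendsto (fun r : ℝ => r * (l.toReal + 1)) (𝓝 0) (𝓝 (0 * (l.toReal + 1))) :=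
      (continuous_id.mul continuous_const).tendsto _
    rw [zero_mul] at this
    exact (this.mono_left nhdsWithin_le_nhds).eventually (gt_mem_nhds hε)
  have e5 : ∀ᶠ r in 𝓝[>] (0 : ℝ), closedBall x r ⊆ U := by
    obtain ⟨δ, hδ, hδU⟩ := Metric.isOpen_iff.1 hU x hx
    filter_upwards [Ioo_mem_nhdsGT hδ] with r hr
    exact (closedBall_subset_ball hr.2).trans hδU
  obtain ⟨r₀, hr₀, hall⟩ := (mem_nhdsGT_iff_exists_Ioo_subset).1
    (e1.and (e2.and (e3.and (e4.and e5))))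
  have hr₀' : 0 < r₀ := hr₀
  have hgrow := growth_of_differential_inequality (I := smoothMass x ν)
    (e := (2 * K + ‖B‖) * ε) (m := ν.real Set.univ) hr₀' hκ
    (by positivity) (fun r hr => hasDerivAt_smoothMass x ν hr) (smoothMass_nonneg x ν)
    (smoothMass_le x ν) (ℓ := ℓ) ?_ hεs
  · refine ⟨ν.real Set.univ * r₀ ^ (-κ) * 2 ^ κ, r₀ / 2, by positivity, fun r hr hrr => ?_⟩
    rw [← ofReal_measureReal]
    refine ENNReal.ofReal_le_ofReal ((measureReal_closedBall_le_smoothMass x ν hr).trans ?_)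
    refine (hgrow (2 * r) (by linarith) (by linarith)).trans (le_of_eq ?_)
    rw [Real.mul_rpow (by norm_num) hr.le]; ring
  intro r hr hrr
  obtain ⟨f1, f2, f3, f4, f5⟩ := hall ⟨hr, hrr⟩
  set m := ν.real (closedBall x r) with hm
  have hm0 : 0 ≤ m := measureReal_nonneg
  have hl0 : 0 ≤ l.toReal := ENNReal.toReal_nonneg
  have htest : IsTestField U (testField B x r) :=
    ⟨testField_contDiff B x r, (isCompact_closedBall x r).of_isClosed_subset
      (isClosed_tsupport _) (tsupport_testField B x hr), (tsupport_testField B x hr).trans f5⟩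
  have i1 := smoothMass_inequality ν x g hg (g x) B hB hB' hc hr (by positivity) f2
  have i2 : |∫ y, contraction (fderiv ℝ (testField B x r) y) (A y) ∂α| ≤ K * (ε * m) := by
    refine abs_integral_le_of_dominated measurableSet_closedBall hK (by positivity)
      (fun y hy => ?_) (fun y hy => (abs_contraction_le _ _).trans ?_) f1
    · rw [fderiv_testField_eq_zero B x hr hy]; simp [contraction]
    · rw [hKdef]; gcongr; exact norm_fderiv_testField_le B x hr hc hy
  have i3 : |∫ y, ⟪testField B x r y, h y⟫ ∂ρ| ≤ (‖B‖ * r) * ((l.toReal + 1) * m) := by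
    refine abs_integral_le_of_dominated measurableSet_closedBall (by positivity) (by positivity)
      (fun y hy => ?_) (fun y hy => (abs_real_inner_le_norm _ _).trans ?_) f3
    · rw [testField_eq_zero B x hr hy, inner_zero_left]
    · gcongr; exact norm_testField_le B x hy
  have i4 : (‖B‖ * r) * ((l.toReal + 1) * m) ≤ ‖B‖ * (ε * m) := by
    rw [mul_assoc, ← mul_assoc r]
    gcongr
  have i5 := hdiv _ htest
  have i6 : m ≤ smoothMass x ν (2 * r) := measureReal_closedBall_le_smoothMass x ν hr
  have i7 : (2 * K + ‖B‖) * ε * m ≤ (2 * K + ‖B‖) * ε * smoothMass x ν (2 * r) := by gcongr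
  refine i1.trans (le_trans ?_ i7)
  have := (abs_le.1 i2).1
  have := (abs_le.1 i3).1
  rw [← hKdef]
  linarith

/-- Absolute continuity of the singular part on a small ball. -/
theorem singular_restrict_ball_absolutelyContinuous {d k ℓ : ℕ}
    {Ω : Set (EuclideanSpace ℝ (Fin d))}
    {A : EuclideanSpace ℝ (Fin d) → EuclideanSpace ℝ (Fin k × Fin d)}
    (hA : LocallyIntegrableOn A Ω volume)
    {νs : Measure (EuclideanSpace ℝ (Fin d))}
    (hνsloc : ∀ K : Set (EuclideanSpace ℝ (Fin d)), K ⊆ Ω → IsCompact K → νs K < ⊤)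
    (hsing : νs ⟂ₘ volume)
    {g : EuclideanSpace ℝ (Fin d) → EuclideanSpace ℝ (Fin k × Fin d)}
    (hgint : ∀ K, K ⊆ Ω → IsCompact K → IntegrableOn g K νs)
    {ρ : Measure (EuclideanSpace ℝ (Fin d))}
    {h : EuclideanSpace ℝ (Fin d) → EuclideanSpace ℝ (Fin k)}
    (hh : ∀ ψ, IsTestField Ω ψ → Integrable (fun x => ⟪ψ x, h x⟫) ρ)
    (hdiv : ∀ ψ : EuclideanSpace ℝ (Fin d) → EuclideanSpace ℝ (Fin k), IsTestField Ω ψ →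
      (∫ x in Ω, contraction (fderiv ℝ ψ x) (A x)) + ∫ x, contraction (fderiv ℝ ψ x) (g x) ∂νs
        = -∫ x, ⟪ψ x, h x⟫ ∂ρ)
    (hrank : ∀ᵐ x ∂νs, ℓ ≤ (Matrix.of fun j i => g x (j, i) : Matrix (Fin k) (Fin d) ℝ).rank)
    {c : EuclideanSpace ℝ (Fin d)} {R : ℝ} (hR : 0 < R) (hc : closedBall c (2 * R) ⊆ Ω)
    {κ : ℝ} (hκ : 0 ≤ κ) (hκℓ : κ < ℓ) : νs.restrict (ball c R) ≪ μH[κ] := by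
  set U := ball c R with hU
  have hUK : U ⊆ closedBall c (2 * R) :=
    ball_subset_closedBall.trans (closedBall_subset_closedBall (by linarith))
  have hUΩ : U ⊆ Ω := hUK.trans hc
  have hKc : IsCompact (closedBall c (2 * R)) := isCompact_closedBall _ _
  have hUm : MeasurableSet U := measurableSet_ball
  have hAU : IntegrableOn A U volume := (hA.integrableOn_compact_subset hc hKc).mono_set hUK
  have hgU : Integrable g (νs.restrict U) := (hgint _ hc hKc).mono_set hUK
  have : IsFiniteMeasure (νs.restrict U) :=
    ⟨by rw [Measure.restrict_apply_univ]; exact (measure_mono hUK).trans_lt (hνsloc _ hc hKc)⟩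
  have hAfin : IsFiniteMeasure ((volume.restrict U).withDensity fun x => ‖A x‖ₑ) :=
    isFiniteMeasure_withDensity hAU.2.ne
  have hhfin : IsFiniteMeasure ((ρ.restrict U).withDensity fun x => ‖h x‖ₑ) :=
    isFiniteMeasure_withDensity (lintegral_enorm_lt_top_of_test hh hR hc).ne
  have hmut : (volume.restrict U).withDensity (fun x => ‖A x‖ₑ) ⟂ₘ νs.restrict U :=
    (hsing.symm.mono_ac (withDensity_absolutelyContinuous _ _ |>.trans
      Measure.absolutelyContinuous_restrict) Measure.absolutelyContinuous_restrict)
  refine absolutelyContinuous_hausdorff_of_ball_le _ hκ ?_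
  filter_upwards [ae_restrict_mem hUm, ae_restrict_of_ae hrank,
    Besicovitch.ae_tendsto_rnDeriv ((volume.restrict U).withDensity fun x => ‖A x‖ₑ)
      (νs.restrict U), hmut.rnDeriv_ae_eq_zero,
    Besicovitch.ae_tendsto_rnDeriv ((ρ.restrict U).withDensity fun x => ‖h x‖ₑ)
      (νs.restrict U), Measure.rnDeriv_lt_top ((ρ.restrict U).withDensity fun x => ‖h x‖ₑ)
      (νs.restrict U),
    (Besicovitch.vitaliFamily (νs.restrict U)).ae_tendsto_lintegral_enorm_sub_div_of_integrable
      hgU] with x hxU hxr hx1 hx2 hx3 hx4 hx5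
  rw [hx2] at hx1
  simp only [withDensity_apply _ measurableSet_closedBall, Pi.zero_apply] at hx1 hx3
  refine closedBall_le_of_polar isOpen_ball (volume.restrict U) (ρ.restrict U) (νs.restrict U)
    A g h hgU (fun ψ hψ => ?_) hxU hxr hx1 (hx5.comp (Besicovitch.tendsto_filterAt _ x)) hx4 hx3
    hκ hκℓ
  have hz : ∀ y, y ∉ tsupport ψ → fderiv ℝ ψ y = 0 := fun y hy => by
    by_contra h0
    exact hy (tsupport_fderiv_subset ℝ (subset_tsupport _ h0))
  have hz' : ∀ (G : EuclideanSpace ℝ (Fin d) → EuclideanSpace ℝ (Fin k × Fin d)) (y),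
      y ∉ tsupport ψ → contraction (fderiv ℝ ψ y) (G y) = 0 := fun G y hy => by
    simp [hz y hy, contraction]
  have hd := hdiv ψ ⟨hψ.1, hψ.2.1, hψ.2.2.trans hUΩ⟩
  rw [setIntegral_eq_integral_of_forall_compl_eq_zero fun y hy =>
    hz' A y fun h' => hy (hUΩ (hψ.2.2 h'))] at hd
  rw [setIntegral_eq_integral_of_forall_compl_eq_zero fun y hy =>
      hz' A y fun h' => hy (hψ.2.2 h'),
    setIntegral_eq_integral_of_forall_compl_eq_zero fun y hy =>
      hz' g y fun h' => hy (hψ.2.2 h'),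
    setIntegral_eq_integral_of_forall_compl_eq_zero fun y hy => by
      rw [image_eq_zero_of_notMem_tsupport fun h' => hy (hψ.2.2 h'), inner_zero_left]]
  exact hd

/-- **Dimension bound for measures with divergence a measure, refined by the rank of the
polar.** Let `μ` be a `k×d`-matrix-valued Radon measure on the open set `Ω ⊆ ℝ^d` (encoded
through its Lebesgue decomposition `μ = A ℒ^d + g |μˢ|`, where the matrix space `ℝ^k ⊗ ℝ^d` is
identified with `EuclideanSpace ℝ (Fin k × Fin d)` carrying the Frobenius norm), satisfying
`Div μ = τ` in the sense of distributions for an `ℝ^k`-valued Radon measure `τ = h ρ`. If the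
polar `g` of the singular part has rank `≥ ℓ` at `|μˢ|`-a.e. point, then
`|μ| = ‖A‖ ℒ^d ⌞ Ω + |μˢ| ≪ ℋ^κ` for every `0 ≤ κ < ℓ`; in particular `dim_ℋ |μ| ≥ ℓ`. -/
theorem divergence_measure_rank_dimension_bound
    {d k : ℕ} (Ω : Set (EuclideanSpace ℝ (Fin d))) (hΩ : IsOpen Ω)
    -- absolutely continuous part `A = μ^{ac}`:
    (A : EuclideanSpace ℝ (Fin d) → EuclideanSpace ℝ (Fin k × Fin d))
    (hA : LocallyIntegrableOn A Ω volume)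
    -- singular part `μˢ = g |μˢ|`, with `|μˢ| = νs` a Radon measure on `Ω` singular w.r.t. `ℒ^d`:
    (νs : Measure (EuclideanSpace ℝ (Fin d)))
    (hνsloc : ∀ K : Set (EuclideanSpace ℝ (Fin d)), K ⊆ Ω → IsCompact K → νs K < ⊤)
    (hνssupp : νs Ωᶜ = 0) (hsing : νs ⟂ₘ volume)
    (g : EuclideanSpace ℝ (Fin d) → EuclideanSpace ℝ (Fin k × Fin d))
    (hgm : AEStronglyMeasurable g νs) (hgnorm : ∀ᵐ x ∂νs, ‖g x‖ = 1)
    -- `τ = h ρ` is an `ℝ^k`-valued Radon measure on `Ω`: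
    (ρ : Measure (EuclideanSpace ℝ (Fin d)))
    (hρloc : ∀ K : Set (EuclideanSpace ℝ (Fin d)), K ⊆ Ω → IsCompact K → ρ K < ⊤)
    (h : EuclideanSpace ℝ (Fin d) → EuclideanSpace ℝ (Fin k)) (hh : AEStronglyMeasurable h ρ)
    -- `Div μ = τ` distributionally: for every smooth compactly supported `ψ : Ω → ℝ^k`,
    -- `∑_{i,j} ∫ ∂ᵢψⱼ dμ_{ji} = −∫ ⟪ψ, h⟫ dρ`:
    (hdiv : ∀ ψ : EuclideanSpace ℝ (Fin d) → EuclideanSpace ℝ (Fin k),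
      ContDiff ℝ (⊤ : ℕ∞) ψ → HasCompactSupport ψ → tsupport ψ ⊆ Ω →
      (∑ i : Fin d, ∑ j : Fin k,
        ((∫ x in Ω, fderiv ℝ ψ x (EuclideanSpace.single i 1) j * A x (j, i) ∂volume) +
          ∫ x, fderiv ℝ ψ x (EuclideanSpace.single i 1) j * g x (j, i) ∂νs))
        = -∫ x, ⟪ψ x, h x⟫ ∂ρ)
    -- rank of the polar of the singular part is `≥ ℓ` a.e.:
    (ℓ : ℕ) (hℓ1 : 1 ≤ ℓ) (hℓd : ℓ ≤ d)
    (hrank : ∀ᵐ x ∂νs, ℓ ≤ (Matrix.of fun j i => g x (j, i) : Matrix (Fin k) (Fin d) ℝ).rank) :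
    ∀ κ : ℝ, 0 ≤ κ → κ < (ℓ : ℝ) →
      ((volume.restrict Ω).withDensity (fun x => (‖A x‖₊ : ℝ≥0∞)) + νs) ≪ μH[κ] := by
  intro κ hκ hκℓ
  -- the absolutely continuous part: Lebesgue measure is absolutely continuous w.r.t. `μH[d]`
  have hac : (volume.restrict Ω).withDensity (fun x => (‖A x‖₊ : ℝ≥0∞)) ≪ μH[κ] := by
    have h1 : (volume : Measure (EuclideanSpace ℝ (Fin d))) ≪
        μH[(Module.finrank ℝ (EuclideanSpace ℝ (Fin d)) : ℕ)] :=
      Measure.absolutelyContinuous_isAddHaarMeasure _ _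
    have h2 : (μH[(Module.finrank ℝ (EuclideanSpace ℝ (Fin d)) : ℕ)] :
        Measure (EuclideanSpace ℝ (Fin d))) ≪ μH[κ] := by
      refine Measure.AbsolutelyContinuous.mk fun s _ hs => ?_
      refine le_antisymm ((Measure.hausdorffMeasure_mono ?_ s).trans hs.le) zero_le
      rw [finrank_euclideanSpace_fin]
      exact hκℓ.le.trans (by exact_mod_cast hℓd)
    exact (withDensity_absolutelyContinuous _ _).trans
      (Measure.absolutelyContinuous_restrict.trans (h1.trans h2))
  have hgint : ∀ K, K ⊆ Ω → IsCompact K → IntegrableOn g K νs := fun K hK hKc =>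
    Measure.integrableOn_of_bounded (M := 1) (hνsloc K hK hKc).ne hgm
      (ae_restrict_of_ae (hgnorm.mono fun x hx => hx.le))
  have hAint : ∀ K, K ⊆ Ω → IsCompact K → IntegrableOn A K (volume.restrict Ω) :=
    fun K hK hKc => (hA.integrableOn_compact_subset hK hKc).mono_measure Measure.restrict_le_self
  have hTeq : ∀ ψ : EuclideanSpace ℝ (Fin d) → EuclideanSpace ℝ (Fin k), IsTestField Ω ψ →
      (∑ i : Fin d, ∑ j : Fin k,
        ((∫ x in Ω, fderiv ℝ ψ x (EuclideanSpace.single i 1) j * A x (j, i) ∂volume) +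
          ∫ x, fderiv ℝ ψ x (EuclideanSpace.single i 1) j * g x (j, i) ∂νs))
      = (∫ x in Ω, contraction (fderiv ℝ ψ x) (A x))
        + ∫ x, contraction (fderiv ℝ ψ x) (g x) ∂νs := by
    intro ψ hψ
    have e : ∀ {μ : Measure (EuclideanSpace ℝ (Fin d))}
        {G : EuclideanSpace ℝ (Fin d) → EuclideanSpace ℝ (Fin k × Fin d)},
        (∀ K, K ⊆ Ω → IsCompact K → IntegrableOn G K μ) →
        ∫ x, contraction (fderiv ℝ ψ x) (G x) ∂μ = ∑ i : Fin d, ∑ j : Fin k,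
          ∫ x, fderiv ℝ ψ x (EuclideanSpace.single i 1) j * G x (j, i) ∂μ := by
      intro μ G hG
      simp only [contraction]
      rw [integral_finsetSum _ fun i _ => integrable_finsetSum _ fun j _ =>
        integrable_fderiv_mul hG hψ i j]
      exact Finset.sum_congr rfl fun i _ =>
        integral_finsetSum _ fun j _ => integrable_fderiv_mul hG hψ i j
    rw [e hAint, e hgint]
    simp only [Finset.sum_add_distrib]
  obtain ⟨h', -, hh', hdiv'⟩ := exists_integrable_density (Ω := Ω) hh
    (fun ψ => ∑ i : Fin d, ∑ j : Fin k,
        ((∫ x in Ω, fderiv ℝ ψ x (EuclideanSpace.single i 1) j * A x (j, i) ∂volume) +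
          ∫ x, fderiv ℝ ψ x (EuclideanSpace.single i 1) j * g x (j, i) ∂νs))
    (fun ψ φ hψ hφ => by
      have e : ∀ x, fderiv ℝ (ψ + φ) x = fderiv ℝ ψ x + fderiv ℝ φ x := fun x =>
        fderiv_add (hψ.1.differentiable (by simp) x) (hφ.1.differentiable (by simp) x)
      simp only [e, add_apply, PiLp.add_apply, add_mul]
      simp only [← Finset.sum_add_distrib]
      refine Finset.sum_congr rfl fun i _ => Finset.sum_congr rfl fun j _ => ?_
      rw [integral_add (integrable_fderiv_mul hAint hψ i j) (integrable_fderiv_mul hAint hφ i j),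
        integral_add (integrable_fderiv_mul hgint hψ i j) (integrable_fderiv_mul hgint hφ i j)]
      ring)
    (fun ψ hψ => hdiv ψ hψ.1 hψ.2.1 hψ.2.2)
  have hdiv'' := fun ψ hψ => (hTeq ψ hψ).symm.trans (hdiv' ψ hψ)
  have hs : νs ≪ μH[κ] := by
    intro S hS
    have h1 : νs (S ∩ Ω) = 0 := by
      refine measure_null_of_locally_null _ fun c hcS => ?_
      obtain ⟨δ, hδ, hδΩ⟩ := Metric.isOpen_iff.1 hΩ c hcS.2
      have hc : closedBall c (2 * (δ / 4)) ⊆ Ω :=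
        (closedBall_subset_ball (by linarith)).trans hδΩ
      refine ⟨S ∩ ball c (δ / 4), ?_, ?_⟩
      · rw [mem_nhdsWithin]
        exact ⟨ball c (δ / 4), isOpen_ball, mem_ball_self (by positivity),
          fun y hy => ⟨hy.2.1, hy.1⟩⟩
      · rw [← Measure.restrict_apply' measurableSet_ball]
        exact singular_restrict_ball_absolutelyContinuous hA hνsloc hsing hgint hh' hdiv'' hrank
          (by positivity) hc hκ hκℓ hS
    refine measure_mono_null (t := S ∩ Ω ∪ Ωᶜ) (fun y hy => ?_) (measure_union_null h1 hνssupp)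
    by_cases hyΩ : y ∈ Ω
    · exact Or.inl ⟨hy, hyΩ⟩
    · exact Or.inr hyΩ
  exact Measure.AbsolutelyContinuous.add_left hac hs
end
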